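/- arXiv:2102.09726 — 3 statements merged into one kernel-verified Lean document; each statement's English description precedes it below -/
import Mathlib

section
/- Let n ≥ 1, ℓ ≥ 2, let Y_0, …, Y_ℓ be n×n complex matrices, and let P(z) = Σ_{k=0}^ℓ Y_k B_k^ℓ(z), a matrix polynomial of grade ℓ written in the Bernstein basis (note P(1) = Y_ℓ). Let L_B(z) be the ℓ×ℓ block pencil with n×n blocks: block (1,1) equal to (z/ℓ)·Y_ℓ + (1−z)·Y_{ℓ−1}, block (1,j) equal to (1−z)·Y_{ℓ−j} for 2 ≤ j ≤ ℓ, block (i,i−1) equal to (z−1)·I_n and block (i,i) equal to (i/(ℓ−i+1))·z·I_n for 2 ≤ i ≤ ℓ, and all other blocks 0. If Y_ℓ = P(1) is invertible, then there exist unimodular matrix polynomials E(z) and F(z) over ℂ[z] of size nℓ such that E(z)·L_B(z)·F(z) = diag(P(z), I_n, …, I_n); that is, L_B(z) is a linearization of P(z). -/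
open Polynomial

open Matrix

open scoped Nat

/-!
Write `ℓ = m + 1`. The block rows of the pencil below the first are `T(z) ⊗ I` for a scalar
`m × (m + 1)` bidiagonal matrix `T(z)`, whose kernel is spanned by the vector `v` with entries
`v_j = binom(m + 1, j + 1) z ^ (m - j) (1 - z) ^ j`. As `v_0 = (m + 1) z ^ m` and
`v_m = (1 - z) ^ m` are coprime, some row `u` satisfies `u · v = 1`. Placing `u` on top of `T(z)`
gives a square matrix `G` with `G v = e_0`. By Cramer's rule `det G · v_0` is the product of the
entries `T_{i,i+1}`, a nonzero constant times `z ^ m`, so `G` is unimodular. Multiplying the pencil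
on the right by `G⁻¹ ⊗ I` therefore turns its lower block rows into those of the identity, and its
corner block into the first block row applied to `v`, which is `P(z)`. One unimodular row operation
clears the rest of the first block row.
-/

section BlockElimination

variable {ι R A : Type*} [Fintype ι] [DecidableEq ι] [CommRing R] [Ring A] [Algebra R A]

theorem exists_isUnit_mul_eq_diagonal_of_rows_eq_one (M : Matrix ι ι A) (i₀ : ι)
    (hM : ∀ i ≠ i₀, M i = (1 : Matrix ι ι A) i) :
    ∃ E : Matrix ι ι A, IsUnit E ∧ E * M = diagonal (Function.update 1 i₀ (M i₀ i₀)) := by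
  set D : Matrix ι ι A := diagonal (Function.update 1 i₀ (M i₀ i₀)) with hD
  have hD_row : ∀ i ≠ i₀, D i = (1 : Matrix ι ι A) i := fun i hi ↦ by
    ext j
    simp [hD, diagonal_apply, one_apply, hi]
  set N := M - D with hN
  have hN_col : ∀ i, N i i₀ = 0 := fun i ↦ by
    by_cases hi : i = i₀
    · simp [hN, hD, hi]
    · simp [hN, hM i hi, hD_row i hi]
  have hN_mul : ∀ B : Matrix ι ι A, (∀ i ≠ i₀, B i = (1 : Matrix ι ι A) i) → N * B = N := by
    intro B hB
    conv_rhs => rw [← mul_one N]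
    ext i j
    simp only [mul_apply]
    refine Finset.sum_congr rfl fun k _ ↦ ?_
    by_cases hk : k = i₀
    · simp [hk, hN_col]
    · rw [hB k hk]
  have hN_sq : N * N = 0 := by
    rw [hN, mul_sub, ← hN, hN_mul M hM, hN_mul D hD_row, sub_self]
  have hN_nilpotent : IsNilpotent N := ⟨2, by rw [sq, hN_sq]⟩
  refine ⟨1 - N, hN_nilpotent.isUnit_one_sub, ?_⟩
  rw [sub_mul, one_mul, hN_mul M hM, hN, sub_sub_cancel]

theorem exists_isUnit_mul_mul_eq_diagonal {G : Matrix ι ι R} (hG : IsUnit G) {v : ι → R} {i₀ : ι}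
    (hv : G *ᵥ v = Pi.single i₀ 1) (L : Matrix ι ι A)
    (hL : ∀ i ≠ i₀, ∀ j, L i j = algebraMap R A (G i j)) :
    ∃ E F : Matrix ι ι A, IsUnit E ∧ IsUnit F ∧
      E * L * F = diagonal (Function.update 1 i₀ (∑ j, v j • L i₀ j)) := by
  have hdet : IsUnit G.det := (isUnit_iff_isUnit_det G).1 hG
  set F : Matrix ι ι A := (algebraMap R A).mapMatrix G⁻¹ with hF
  have hGF : (algebraMap R A).mapMatrix G * F = 1 := by
    rw [hF, ← map_mul, mul_nonsing_inv G hdet, map_one]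
  have hcol : ∀ j, G⁻¹ j i₀ = v j := fun j ↦ by
    have : G⁻¹ *ᵥ Pi.single i₀ 1 = v := by
      rw [← hv, mulVec_mulVec, nonsing_inv_mul G hdet, one_mulVec]
    simpa using congrFun this j
  have hrow : ∀ i ≠ i₀, (L * F) i = (1 : Matrix ι ι A) i := fun i hi ↦ by
    ext j
    simp [← hGF, mul_apply, hL i hi]
  have hpivot : (L * F) i₀ i₀ = ∑ j, v j • L i₀ j := by
    simp [hF, mul_apply, hcol, Algebra.smul_def, Algebra.commutes]
  obtain ⟨E, hE, hELF⟩ := exists_isUnit_mul_eq_diagonal_of_rows_eq_one (L * F) i₀ hrow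
  exact ⟨E, F, hE, (isUnit_nonsing_inv_iff.2 hG).map _, by rw [mul_assoc, hELF, hpivot]⟩

theorem det_mul_eq_of_mulVec_eq_single {m : ℕ} {G : Matrix (Fin (m + 1)) (Fin (m + 1)) R}
    {v : Fin (m + 1) → R} (hv : G *ᵥ v = Pi.single 0 1) :
    G.det * v 0 = (G.submatrix Fin.succ Fin.succ).det := by
  have h : G.det • v = G.adjugate *ᵥ Pi.single 0 1 := by
    rw [← hv, mulVec_mulVec, adjugate_mul, smul_mulVec, one_mulVec]
  simpa [adjugate_fin_succ_eq_det_submatrix] using congrFun h 0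

end BlockElimination

section Linearization

variable {K n : Type*} [Field K] [Fintype n] [DecidableEq n]

/-- A square matrix over `K[X]` is unimodular if its determinant is a nonzero constant. -/
def IsUnimodular (A : Matrix n n K[X]) : Prop :=
  ∃ c : K, c ≠ 0 ∧ A.det = C c

theorem isUnimodular_iff_isUnit {A : Matrix n n K[X]} : IsUnimodular A ↔ IsUnit A := by
  simp [isUnit_iff_isUnit_det, Polynomial.isUnit_iff, IsUnimodular, eq_comm]

/-- The `ℓ × ℓ` block matrix `L` is a linearization of `P`: it is equivalent to
`diag(P, I, …, I)` by unimodular matrices. The first factor of the index `Fin ℓ × n` selects the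
block. -/
def IsLinearization {ℓ : ℕ} (L : Matrix (Fin ℓ × n) (Fin ℓ × n) K[X]) (P : Matrix n n K[X]) :
    Prop :=
  ∃ E F : Matrix (Fin ℓ × n) (Fin ℓ × n) K[X], IsUnimodular E ∧ IsUnimodular F ∧
    E * L * F = of fun q r ↦
      if q.1 = r.1 then (if q.1.val = 0 then P q.2 r.2 else if q.2 = r.2 then 1 else 0) else 0

theorem isLinearization_of_mulVec_eq_single {m : ℕ}
    {G : Matrix (Fin (m + 1)) (Fin (m + 1)) K[X]} (hG : IsUnit G) {v : Fin (m + 1) → K[X]}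
    (hv : G *ᵥ v = Pi.single 0 1) (L : Matrix (Fin (m + 1)) (Fin (m + 1)) (Matrix n n K[X]))
    (hL : ∀ i ≠ 0, ∀ j, L i j = algebraMap K[X] _ (G i j)) :
    IsLinearization (comp _ _ _ _ _ L) (∑ j, v j • L 0 j) := by
  obtain ⟨E, F, hE, hF, hELF⟩ := exists_isUnit_mul_mul_eq_diagonal hG hv L hL
  let flatten := compRingEquiv (Fin (m + 1)) n K[X]
  have hflat : flatten E * flatten L * flatten F =
      flatten (diagonal (Function.update 1 0 (∑ j, v j • L 0 j))) := by
    rw [← map_mul, ← map_mul, hELF]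
  refine ⟨flatten E, flatten F, isUnimodular_iff_isUnit.2 (hE.map flatten),
    isUnimodular_iff_isUnit.2 (hF.map flatten), hflat.trans ?_⟩
  ext ⟨i, s⟩ ⟨j, t⟩ : 1
  rcases eq_or_ne i j with rfl | hij
  · rcases eq_or_ne i 0 with rfl | hi
    · simp [flatten]
    · simp [flatten, hi, one_apply]
  · simp [flatten, hij]

end Linearization

section BernsteinKernel

variable (R : Type*) [CommRing R] (m : ℕ)

/-- The vector `v` spanning the kernel of the lower rows of the Bernstein pencil of grade `m + 1`,
which the first row of the pencil sends to the Bernstein form. -/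
noncomputable def bernsteinKernel (j : Fin (m + 1)) : R[X] :=
  ((m + 1).choose (j + 1) : R[X]) * X ^ (m - j : ℕ) * (1 - X) ^ (j : ℕ)

variable {R m}

theorem one_sub_X_mul_bernsteinKernel (j : Fin (m + 1)) :
    (1 - X) * bernsteinKernel R m j = bernsteinPolynomial R (m + 1) (m - j) := by
  have hj : m + 1 - (m - j) = (j : ℕ) + 1 := by omega
  rw [bernsteinKernel, bernsteinPolynomial, hj,
    Nat.choose_symm_of_eq_add (show m + 1 = (m - j) + (j + 1) by omega)]
  ring

theorem X_mul_bernsteinKernel_zero :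
    X * bernsteinKernel R m 0 = C ((m + 1 : ℕ) : R) * bernsteinPolynomial R (m + 1) (m + 1) := by
  simp [bernsteinKernel, bernsteinPolynomial, pow_succ', mul_left_comm]

theorem exists_dotProduct_bernsteinKernel_eq_one (hm : IsUnit ((m + 1 : ℕ) : R)) :
    ∃ u : Fin (m + 1) → R[X], u ⬝ᵥ bernsteinKernel R m = 1 := by
  have hX : IsCoprime ((X : R[X]) ^ m) ((1 - X) ^ m) := IsCoprime.pow ⟨1, 1, by ring⟩
  have hunit : IsUnit ((m + 1 : ℕ) : R[X]) := by
    simpa only [map_natCast] using hm.map (C : R →+* R[X])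
  obtain ⟨a, b, hab⟩ : IsCoprime (bernsteinKernel R m 0) (bernsteinKernel R m (Fin.last m)) := by
    simpa [bernsteinKernel] using (isCoprime_mul_unit_left_left hunit _ _).2 hX
  refine ⟨Pi.single 0 a + Pi.single (Fin.last m) b, ?_⟩
  rw [add_dotProduct, single_dotProduct, single_dotProduct, hab]

end BernsteinKernel

section BernsteinRows

theorem natCast_ne_zero_of_factorial_ne_zero {R : Type*} [Semiring R] {k ℓ : ℕ}
    (hℓ : (ℓ ! : R) ≠ 0) (hk : k ≠ 0) (hkℓ : k ≤ ℓ) : (k : R) ≠ 0 :=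
  ne_zero_of_dvd_ne_zero hℓ (Nat.cast_dvd_cast (Nat.dvd_factorial (Nat.pos_of_ne_zero hk) hkℓ))

variable (K : Type*) [Field K] (m : ℕ)

/-- The scalar matrix whose Kronecker product with the identity forms the block rows below the
first of the Bernstein pencil of grade `m + 1`. Row `i` here is block row `i + 1` of the pencil. -/
noncomputable def bernsteinRows : Matrix (Fin m) (Fin (m + 1)) K[X] :=
  of fun i ↦ Pi.single i.castSucc (X - 1) +
    Pi.single i.succ (C (((i + 1 + 1 : ℕ) : K) / ((m - i : ℕ) : K)) * X)

variable {K m}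

theorem bernsteinRows_mulVec_bernsteinKernel (hm : (m ! : K) ≠ 0) :
    bernsteinRows K m *ᵥ bernsteinKernel K m = 0 := by
  ext1 i
  have hne : ((m - i : ℕ) : K) ≠ 0 :=
    natCast_ne_zero_of_factorial_ne_zero hm (by omega) (by omega)
  have hchoose : C (((i + 1 + 1 : ℕ) : K) / ((m - i : ℕ) : K)) *
      ((m + 1).choose (i + 1 + 1) : K[X]) = ((m + 1).choose (i + 1) : K[X]) := by
    have h := Nat.choose_succ_right_eq (m + 1) (i + 1)
    rw [Nat.add_sub_add_right] at h
    rw [← C_eq_natCast, ← C_eq_natCast, ← C_mul, div_mul_eq_mul_div, C_inj, div_eq_iff hne,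
      mul_comm]
    exact_mod_cast congrArg (Nat.cast : ℕ → K) h
  have hpow : (X : K[X]) ^ (m - i : ℕ) = X * X ^ (m - (i + 1) : ℕ) := by
    rw [← pow_succ']
    congr 1
    omega
  simp only [bernsteinRows, mulVec, of_apply, add_dotProduct, single_dotProduct, bernsteinKernel,
    Fin.val_castSucc, Fin.val_succ, Pi.zero_apply]
  rw [hpow, ← hchoose]
  ring

theorem det_bernsteinRows_submatrix_succ :
    ((bernsteinRows K m).submatrix id Fin.succ).det =
      C (∏ i : Fin m, ((i + 1 + 1 : ℕ) : K) / ((m - i : ℕ) : K)) * X ^ m := by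
  have hlower : ((bernsteinRows K m).submatrix id Fin.succ).IsLowerTriangular := by
    intro i j hij
    have hij : (i : ℕ) < j := hij
    have hcast : j.succ ≠ i.castSucc := Fin.ne_of_val_ne (by simp; omega)
    have hsucc : j.succ ≠ i.succ := Fin.ne_of_val_ne (by simp; omega)
    simp [bernsteinRows, hcast, hsucc]
  have hdiag (i : Fin m) : bernsteinRows K m i i.succ =
      C (((i + 1 + 1 : ℕ) : K) / ((m - i : ℕ) : K)) * X := by
    simp [bernsteinRows, Fin.ext_iff]
  rw [det_of_isLowerTriangular _ hlower]
  simp only [submatrix_apply, id_eq, hdiag, Finset.prod_mul_distrib, map_prod, Finset.prod_const,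
    Finset.card_univ, Fintype.card_fin]

theorem isUnit_of_submatrix_eq_bernsteinRows (hm : ((m + 1)! : K) ≠ 0)
    {G : Matrix (Fin (m + 1)) (Fin (m + 1)) K[X]}
    (hrows : G.submatrix Fin.succ id = bernsteinRows K m)
    (hG : G *ᵥ bernsteinKernel K m = Pi.single 0 1) : IsUnit G := by
  have hprod : ∏ i : Fin m, ((i + 1 + 1 : ℕ) : K) / ((m - i : ℕ) : K) ≠ 0 :=
    Finset.prod_ne_zero_iff.2 fun i _ ↦ div_ne_zero
      (natCast_ne_zero_of_factorial_ne_zero hm (by omega) (by omega))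
      (natCast_ne_zero_of_factorial_ne_zero hm (by omega) (by omega))
  have hminor : G.submatrix Fin.succ Fin.succ = (bernsteinRows K m).submatrix id Fin.succ := by
    rw [← hrows, submatrix_submatrix, Function.comp_id, Function.id_comp]
  have hdet : G.det * ((m + 1 : ℕ) : K[X]) * X ^ m =
      C (∏ i : Fin m, ((i + 1 + 1 : ℕ) : K) / ((m - i : ℕ) : K)) * X ^ m := by
    rw [← det_bernsteinRows_submatrix_succ, ← hminor, ← det_mul_eq_of_mulVec_eq_single hG]
    simp [bernsteinKernel, mul_assoc]
  rw [isUnit_iff_isUnit_det]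
  refine isUnit_of_mul_isUnit_left (y := ((m + 1 : ℕ) : K[X])) ?_
  rw [mul_right_cancel₀ (pow_ne_zero m X_ne_zero) hdet]
  exact isUnit_C.2 hprod.isUnit

theorem exists_isUnit_mulVec_bernsteinKernel (hm : ((m + 1)! : K) ≠ 0) :
    ∃ G : Matrix (Fin (m + 1)) (Fin (m + 1)) K[X], IsUnit G ∧
      G.submatrix Fin.succ id = bernsteinRows K m ∧ G *ᵥ bernsteinKernel K m = Pi.single 0 1 := by
  have hm_succ : ((m + 1 : ℕ) : K) ≠ 0 :=
    natCast_ne_zero_of_factorial_ne_zero hm m.succ_ne_zero le_rfl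
  have hm_factorial : (m ! : K) ≠ 0 := (hm.isUnit.natCast_factorial_of_le m.le_succ).ne_zero
  obtain ⟨u, hu⟩ := exists_dotProduct_bernsteinKernel_eq_one hm_succ.isUnit
  let G : Matrix (Fin (m + 1)) (Fin (m + 1)) K[X] := of (vecCons u (of.symm (bernsteinRows K m)))
  have hG : G *ᵥ bernsteinKernel K m = Pi.single 0 1 := by
    rw [cons_mulVec, hu, Equiv.apply_symm_apply,
      bernsteinRows_mulVec_bernsteinKernel hm_factorial]
    ext1 i
    refine Fin.cases ?_ (fun i ↦ ?_) i <;> simp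
  exact ⟨G, isUnit_of_submatrix_eq_bernsteinRows hm rfl hG, rfl, hG⟩

end BernsteinRows

section BernsteinPencil

variable {K n : Type*} [Field K]

/-- The matrix polynomial `P(z) = ∑ₖ Yₖ Bₖ^ℓ(z)` of grade `ℓ`. The coefficients form an infinite
sequence of which only the first `ℓ + 1` terms matter. -/
noncomputable def bernsteinMatrixPolynomial (ℓ : ℕ) (Y : ℕ → Matrix n n K) : Matrix n n K[X] :=
  ∑ k ∈ Finset.range (ℓ + 1), bernsteinPolynomial K ℓ k • (Y k).map C

variable [DecidableEq n]

/-- The Bernstein companion pencil `L_B(z)` of grade `ℓ`, written out entrywise: the index `(i, s)`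
stands for position `s` in the block with 0-based index `i`. -/
noncomputable def bernsteinPencil (ℓ : ℕ) (Y : ℕ → Matrix n n K) :
    Matrix (Fin ℓ × n) (Fin ℓ × n) K[X] :=
  of fun q r ↦
    if q.1.val = 0 then
      if r.1.val = 0 then
        ((C (ℓ : K)⁻¹ * X) • (Y ℓ).map C + (1 - X : K[X]) • (Y (ℓ - 1)).map C) q.2 r.2
      else ((1 - X : K[X]) • (Y (ℓ - 1 - r.1.val)).map C) q.2 r.2
    else if r.1.val + 1 = q.1.val then if q.2 = r.2 then X - 1 else 0
    else if r.1 = q.1 then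
      if q.2 = r.2 then C (((q.1.val + 1 : ℕ) : K) / ((ℓ - q.1.val : ℕ) : K)) * X else 0
    else 0

variable {m : ℕ} (Y : ℕ → Matrix n n K)

theorem bernsteinPencil_block_zero (j : Fin (m + 1)) :
    (comp _ _ _ _ _).symm (bernsteinPencil (m + 1) Y) 0 j =
      (if j = 0 then (C ((m + 1 : ℕ) : K)⁻¹ * X) • (Y (m + 1)).map C else 0) +
        (1 - X : K[X]) • (Y (m - j)).map C := by
  ext1 s t
  rcases eq_or_ne j 0 with rfl | hj
  · simp [bernsteinPencil]
  · simp [bernsteinPencil, hj]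

theorem bernsteinPencil_block_succ [Fintype n] (i : Fin m) (j : Fin (m + 1)) :
    (comp _ _ _ _ _).symm (bernsteinPencil (m + 1) Y) i.succ j =
      algebraMap K[X] (Matrix n n K[X]) (bernsteinRows K m i j) := by
  ext1 s t
  simp only [bernsteinPencil, bernsteinRows, comp_symm_apply, of_apply, algebraMap_matrix_apply,
    Pi.add_apply, Pi.single_apply, Fin.val_succ, Nat.add_sub_add_right,
    Algebra.algebraMap_self, RingHom.id_apply]
  grind

theorem sum_bernsteinKernel_smul_bernsteinPencil_block (hm : ((m + 1 : ℕ) : K) ≠ 0) :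
    ∑ j, bernsteinKernel K m j • (comp _ _ _ _ _).symm (bernsteinPencil (m + 1) Y) 0 j =
      bernsteinMatrixPolynomial (m + 1) Y := by
  have hlead : (bernsteinKernel K m 0 * (C ((m + 1 : ℕ) : K)⁻¹ * X)) =
      bernsteinPolynomial K (m + 1) (m + 1) := by
    rw [mul_left_comm, mul_comm _ X, X_mul_bernsteinKernel_zero, ← mul_assoc, ← C_mul,
      inv_mul_cancel₀ hm, C_1, one_mul]
  have hrest (j : Fin (m + 1)) :
      bernsteinKernel K m j * (1 - X) = bernsteinPolynomial K (m + 1) (m - j) := by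
    rw [mul_comm, one_sub_X_mul_bernsteinKernel]
  simp only [bernsteinPencil_block_zero, smul_add, Finset.sum_add_distrib, smul_ite, smul_zero,
    Finset.sum_ite_eq', Finset.mem_univ, if_true, smul_smul, hlead, hrest]
  rw [bernsteinMatrixPolynomial, Finset.sum_range_succ, ← Finset.sum_range_reflect,
    Finset.sum_range, add_comm, Nat.add_sub_cancel]

theorem bernstein_pencil_is_linearization_general [Fintype n] {ℓ : ℕ} (hℓ : ℓ ≠ 0)
    (hchar : (ℓ ! : K) ≠ 0) :
    IsLinearization (bernsteinPencil ℓ Y) (bernsteinMatrixPolynomial ℓ Y) := by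
  obtain ⟨m, rfl⟩ := Nat.exists_eq_succ_of_ne_zero hℓ
  obtain ⟨G, hG, hrows, hker⟩ := exists_isUnit_mulVec_bernsteinKernel hchar
  have h := isLinearization_of_mulVec_eq_single hG hker
    ((comp _ _ _ _ _).symm (bernsteinPencil (m + 1) Y)) fun i hi j ↦ by
      obtain ⟨i, rfl⟩ := Fin.exists_succ_eq.2 hi
      rw [bernsteinPencil_block_succ, ← hrows, submatrix_apply, id]
  rwa [Equiv.apply_symm_apply, sum_bernsteinKernel_smul_bernsteinPencil_block Y
    (natCast_ne_zero_of_factorial_ne_zero hchar hℓ le_rfl)] at h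

end BernsteinPencil

/-- Let `P(z) = Σ_{k=0}^ℓ Y_k B_k^ℓ(z)` be an `n×n` matrix polynomial
of grade `ℓ ≥ 2` in the Bernstein basis (so `P(1) = Y_ℓ`), and let `L_B(z)` be the
Bernstein companion pencil (blocks encoded on `Fin ℓ × Fin n`, block index first,
0-based, shifted from the 1-based description).  If `Y_ℓ` is invertible then
`L_B(z)` is a linearization of `P(z)`: there are unimodular matrix polynomials
`E(z)`, `F(z)` with `E(z)·L_B(z)·F(z) = diag(P(z), I_n, …, I_n)`. -/
theorem bernstein_pencil_is_linearization
    (n ℓ : ℕ) (hn : 1 ≤ n) (hℓ : 2 ≤ ℓ)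
    (Y : ℕ → Matrix (Fin n) (Fin n) ℂ)
    (P : Matrix (Fin n) (Fin n) (Polynomial ℂ))
    (hP : P = ∑ k ∈ Finset.range (ℓ + 1),
      (C ((Nat.choose ℓ k : ℂ)) * X ^ k * (1 - X) ^ (ℓ - k)) • (Y k).map C)
    (LB : Matrix (Fin ℓ × Fin n) (Fin ℓ × Fin n) (Polynomial ℂ))
    (hLB : ∀ i j : Fin ℓ, ∀ s t : Fin n, LB (i, s) (j, t) =
      if i.val = 0 then
        (if j.val = 0 then
          ((C ((ℓ : ℂ))⁻¹ * X) • (Y ℓ).map C +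
            ((1 - X : Polynomial ℂ)) • (Y (ℓ - 1)).map C) s t
        else ((1 - X : Polynomial ℂ) • (Y (ℓ - 1 - j.val)).map C) s t)
      else if j.val + 1 = i.val then (if s = t then X - 1 else 0)
      else if j = i then
        (if s = t then C (((i.val + 1 : ℕ) : ℂ) / ((ℓ - i.val : ℕ) : ℂ)) * X else 0)
      else 0)
    (hY : IsUnit (Y ℓ)) :
    ∃ E Fm : Matrix (Fin ℓ × Fin n) (Fin ℓ × Fin n) (Polynomial ℂ),
      (∃ c : ℂ, c ≠ 0 ∧ E.det = C c) ∧
      (∃ c : ℂ, c ≠ 0 ∧ Fm.det = C c) ∧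
      E * LB * Fm = Matrix.of fun q r : Fin ℓ × Fin n =>
        if q.1 = r.1 then
          (if q.1.val = 0 then P q.2 r.2 else if q.2 = r.2 then 1 else 0)
        else 0 := by
  obtain rfl : LB = bernsteinPencil ℓ Y := by
    ext ⟨i, s⟩ ⟨j, t⟩ : 1
    exact hLB i j s t
  obtain rfl : P = bernsteinMatrixPolynomial ℓ Y := by
    simpa [bernsteinMatrixPolynomial, bernsteinPolynomial] using hP
  exact bernstein_pencil_is_linearization_general Y (by omega) (mod_cast ℓ.factorial_ne_zero)
end

section
/- Let F be a field, n ≥ 1, ℓ ≥ 1, and let τ_0, …, τ_ℓ ∈ F be distinct with barycentric weights β_k = ∏_{j≠k} 1/(τ_k − τ_j) and Lagrange basis polynomials w_k(z) = β_k ∏_{j≠k}(z − τ_j). Let P_0, …, P_ℓ be invertible n×n matrices over F and P(z) = Σ_{k=0}^ℓ P_k w_k(z). Let L(z) be the n(ℓ+2) × n(ℓ+2) block pencil (block indices 0, …, ℓ+1): block (0,0) = 0, block (0, 1+i) = −P_{ℓ−i} for 0 ≤ i ≤ ℓ, block (1+i, 0) = β_{ℓ−i}·I_n for 0 ≤ i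 ≤ ℓ, block (1+i, 1+i) = (z − τ_{ℓ−i})·I_n for 0 ≤ i ≤ ℓ, other blocks 0. Define G = (1/β_0)(z − τ_0)·I_n; U_k = −(β_k/β_0)(τ_k − τ_0)·P_k^{−1} for 1 ≤ k ≤ ℓ; then for each 1 ≤ k ≤ ℓ the quantity β_k G + U_k P(z) is divisible by (z − τ_k) and we set H_k(z) = −(β_k G + U_k P(z))/(z − τ_k), a matrix polynomial of grade ℓ−1. Define M(z) to be equal to L(z) except in the last block column, where: block (0, ℓ+1) of M is 0, block (i, ℓ+1) of M is U_{ℓ+1−i} for 1 ≤ i ≤ ℓ, and block (ℓ+1, ℓ+1) of M is 0; and define H(z) to be the block identity matrix except: block (ℓ+1, ℓ+1) is P(z), block (0, ℓ+1) is G, and block (i, ℓ+1) is H_{ℓ+1−i}(z) for 1 ≤ i ≤ ℓ. Then M(z)·H(z) = L(z), the identity Σ_{k=1}^ℓ P_k H_k(z) = P_0 holds, and det M(z) is a nonzero constant of F (M is unimodular). -/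
open Polynomial

/-!
Both `H` and `M` differ from a known block matrix in one block column only, and multiplying by an
identity matrix with one column replaced just replaces a column of the other factor. So `M * H = L`
amounts to one matrix-vector identity, whose top row is `∑ P_k H_k = P_0`. To prove that row,
multiply by the node polynomial: the two resulting sums over all the nodes are `P` times the
interpolants of `z - τ_0`, and they cancel up to the `k = 0` term. For unimodularity, replacing the
first column of `L` by `L x`, with `x = (w, -β_k w / (z - τ_k))`, makes it block triangular and
gives `det L = det P`. Since also `det H = det P ≠ 0`, it follows that `det M = 1`.
-/

section BlockMatrix

open Finset
open scoped Matrix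

theorem updateCol_mulVec_apply {m n α : Type*} [Fintype n] [DecidableEq n]
    [NonUnitalNonAssocSemiring α] (A : Matrix m n α) (o : n) (u : m → α) (x : n → α) (r : m) :
    (A.updateCol o u *ᵥ x) r = (A *ᵥ Function.update x o 0) r + u r * x o := by
  simp only [Matrix.mulVec, dotProduct]
  rw [← add_sum_erase _ _ (mem_univ o), ← add_sum_erase univ (fun c => A r c * _) (mem_univ o),
    Matrix.updateCol_self, Function.update_self, mul_zero, zero_add, add_comm]
  congr 1
  refine sum_congr rfl fun c hc => ?_
  rw [Matrix.updateCol_ne (ne_of_mem_erase hc), Function.update_of_ne (ne_of_mem_erase hc)]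

variable {κ m R : Type*} [Fintype κ] [DecidableEq κ] [Fintype m] [DecidableEq m] [CommRing R]

theorem det_comp_mul (A B : Matrix κ κ (Matrix m m R)) :
    (Matrix.comp κ κ m m R (A * B)).det =
      (Matrix.comp κ κ m m R A).det * (Matrix.comp κ κ m m R B).det := by
  rw [← Matrix.det_mul]
  exact congrArg Matrix.det (map_mul (Matrix.compRingEquiv κ m R) A B)

theorem det_toSquareBlockProp_comp_fst_eq (A : Matrix κ κ (Matrix m m R)) (a : κ) :
    ((Matrix.comp κ κ m m R A).toSquareBlockProp (·.1 = a)).det = (A a a).det := by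
  let e : m ≃ {q : κ × m // q.1 = a} :=
    ⟨fun i => ⟨(a, i), rfl⟩, fun q => q.1.2, fun _ => rfl, by rintro ⟨⟨_, _⟩, rfl⟩; rfl⟩
  exact (Matrix.det_submatrix_equiv_self e _).symm

theorem det_comp_one_updateCol (a : κ) (x : κ → Matrix m m R) :
    (Matrix.comp κ κ m m R ((1 : Matrix κ κ (Matrix m m R)).updateCol a x)).det = (x a).det := by
  have hrow : ∀ q : κ × m, q.1 = a → ∀ t : κ × m, ¬t.1 = a →
      Matrix.comp κ κ m m R ((1 : Matrix κ κ (Matrix m m R)).updateCol a x) q t = 0 := by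
    rintro ⟨_, i⟩ rfl ⟨c, j⟩ hc
    simp [Matrix.comp_apply, Matrix.updateCol_ne hc, Matrix.one_apply_ne (Ne.symm hc)]
  have hrest : (Matrix.comp κ κ m m R
      ((1 : Matrix κ κ (Matrix m m R)).updateCol a x)).toSquareBlockProp (fun q => ¬q.1 = a) =
        1 := by
    ext ⟨⟨r, i⟩, hr⟩ ⟨⟨c, j⟩, hc⟩
    have hone := congrFun (congrFun (Matrix.comp_one (R := R) (I := κ) (J := m)) (r, i)) (c, j)
    simpa [Matrix.toSquareBlockProp, Matrix.comp_apply, Matrix.updateCol_ne hc,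
      Matrix.one_apply] using hone
  rw [Matrix.twoBlockTriangular_det' _ _ hrow, det_toSquareBlockProp_comp_fst_eq, hrest,
    Matrix.det_one, mul_one, Matrix.updateCol_self]

/-- The block arrowhead matrix with zero apex `(a, a)`, blocks `-p c` along row `a`, and scalar
blocks `b r` down column `a` and `d r` along the diagonal. The values `p a`, `b a`, `d a` at the
apex are ignored. -/
def blockArrowhead (a : κ) (p : κ → Matrix m m R) (b d : κ → R) : Matrix κ κ (Matrix m m R) :=
  Matrix.of fun r c =>
    if r = a then (if c = a then 0 else -p c)
    else if c = a then b r • 1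
    else if r = c then d r • 1
    else 0

variable {a : κ} {p : κ → Matrix m m R} {b d : κ → R}

theorem blockArrowhead_mulVec_apex (x : κ → Matrix m m R) :
    (blockArrowhead a p b d *ᵥ x) a = -∑ c ∈ univ.erase a, p c * x c := by
  rw [Matrix.mulVec, dotProduct, ← add_sum_erase _ _ (mem_univ a), ← sum_neg_distrib]
  simp only [blockArrowhead, Matrix.of_apply, if_true, zero_mul, zero_add]
  exact sum_congr rfl fun c hc => by rw [if_neg (ne_of_mem_erase hc), neg_mul]

theorem blockArrowhead_mulVec_of_ne {r : κ} (hr : r ≠ a) (x : κ → Matrix m m R) :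
    (blockArrowhead a p b d *ᵥ x) r = b r • x a + d r • x r := by
  rw [Matrix.mulVec, dotProduct, ← add_sum_erase _ _ (mem_univ a),
    sum_eq_single_of_mem r (mem_erase.2 ⟨hr, mem_univ r⟩)]
  · simp [blockArrowhead, hr]
  · intro c hc hcr
    simp [blockArrowhead, hr, ne_of_mem_erase hc, hcr.symm]

theorem blockArrowhead_updateCol_mul_one_updateCol {o : κ} (hoa : o ≠ a)
    {u x : κ → Matrix m m R} (hua : u a = 0) (huo : u o = 0)
    (hapex_row : ∑ k ∈ (univ.erase a).erase o, p k * x k = p o) (ho : b o • x a = d o • 1)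
    (hk : ∀ k, k ≠ a → k ≠ o → b k • x a + d k • x k + u k * x o = 0) :
    (blockArrowhead a p b d).updateCol o u * (1 : Matrix κ κ (Matrix m m R)).updateCol o x =
      blockArrowhead a p b d := by
  rw [Matrix.mul_updateCol, mul_one, Matrix.updateCol_idem]
  conv_rhs => rw [← Matrix.updateCol_eq_self (blockArrowhead a p b d) o]
  congr 1
  ext1 r
  rw [updateCol_mulVec_apply]
  rcases eq_or_ne r a with rfl | hra
  · rw [blockArrowhead_mulVec_apex, hua, zero_mul, add_zero,
      ← add_sum_erase _ _ (mem_erase.2 ⟨hoa, mem_univ o⟩), Function.update_self, mul_zero, zero_add,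
      sum_congr rfl fun k hk => by rw [Function.update_of_ne (ne_of_mem_erase hk)], hapex_row]
    simp [blockArrowhead, hoa]
  rw [blockArrowhead_mulVec_of_ne hra, Function.update_of_ne hoa.symm]
  rcases eq_or_ne r o with rfl | hro
  · simp [blockArrowhead, hoa, huo, ho]
  · rw [Function.update_of_ne hro, hk r hra hro]
    simp [blockArrowhead, hra, hoa, hro]

theorem det_comp_blockArrowhead_updateCol_apex {y : κ → Matrix m m R}
    (hy : ∀ r, r ≠ a → y r = 0) :
    (Matrix.comp κ κ m m R ((blockArrowhead a p b d).updateCol a y)).det =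
      (y a).det * (∏ k ∈ univ.erase a, d k) ^ Fintype.card m := by
  set A := (blockArrowhead a p b d).updateCol a y with hA
  have hcol : ∀ q : κ × m, ¬q.1 = a → ∀ t : κ × m, t.1 = a →
      Matrix.comp κ κ m m R A q t = 0 := by
    rintro ⟨r, i⟩ hr ⟨_, j⟩ rfl
    simp [A, Matrix.comp_apply, hy r hr]
  have hrest : (Matrix.comp κ κ m m R A).toSquareBlockProp (fun q => ¬q.1 = a) =
      Matrix.diagonal fun q => d q.1.1 := by
    ext ⟨⟨r, i⟩, hr⟩ ⟨⟨c, j⟩, hc⟩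
    replace hr : r ≠ a := hr
    replace hc : c ≠ a := hc
    by_cases hrc : r = c <;>
      simp [A, Matrix.toSquareBlockProp, Matrix.comp_apply, blockArrowhead,
        Matrix.diagonal_apply, Matrix.one_apply, hr, hc, hrc]
  have hprod : ∏ q : {q : κ × m // ¬q.1 = a}, d q.1.1 =
      (∏ k ∈ univ.erase a, d k) ^ Fintype.card m := by
    rw [← prod_subtype (univ.erase a ×ˢ univ) (by simp) fun q : κ × m => d q.1, prod_product,
      ← prod_pow]
    simp
  rw [Matrix.twoBlockTriangular_det _ _ hcol, det_toSquareBlockProp_comp_fst_eq, hrest,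
    Matrix.det_diagonal, hprod, hA, Matrix.updateCol_self]

theorem det_comp_blockArrowhead_mul_pow {w : R} {q : κ → R} (hq : ∀ k, k ≠ a → d k * q k = w) :
    (Matrix.comp κ κ m m R (blockArrowhead a p b d)).det * w ^ Fintype.card m =
      (∑ k ∈ univ.erase a, (b k * q k) • p k).det * (∏ k ∈ univ.erase a, d k) ^ Fintype.card m := by
  set x : κ → Matrix m m R := Function.update (fun k => -(b k * q k) • 1) a (w • 1) with hx
  have hapex : (blockArrowhead a p b d *ᵥ x) a = ∑ k ∈ univ.erase a, (b k * q k) • p k := by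
    rw [blockArrowhead_mulVec_apex, ← sum_neg_distrib]
    refine sum_congr rfl fun k hk => ?_
    simp [hx, Function.update_of_ne (ne_of_mem_erase hk)]
  have hbelow : ∀ r, r ≠ a → (blockArrowhead a p b d *ᵥ x) r = 0 := by
    intro r hr
    rw [blockArrowhead_mulVec_of_ne hr, hx, Function.update_self, Function.update_of_ne hr,
      smul_smul, smul_smul, ← add_smul, ← hq r hr]
    convert zero_smul R _
    ring
  have hdet : (x a).det = w ^ Fintype.card m := by simp [hx]
  rw [← hdet, ← det_comp_one_updateCol a x, ← det_comp_mul, Matrix.mul_updateCol, mul_one,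
    det_comp_blockArrowhead_updateCol_apex hbelow, hapex]

end BlockMatrix

section Interpolation

open Finset Lagrange

variable {F ι m n : Type*} [Field F] [DecidableEq ι] {s : Finset ι} {v : ι → F} {o k : ι}

theorem basis_eq_C_nodalWeight_mul_nodal_erase :
    Lagrange.basis s v k = C (nodalWeight s v k) * nodal (s.erase k) v := by
  simp only [Lagrange.basis, basisDivisor, nodalWeight, nodal,
    prod_mul_distrib, map_prod]

theorem C_inv_nodalWeight_mul_X_sub_C_mul_basis (hv : Set.InjOn v s) (ho : o ∈ s) :
    C (nodalWeight s v o)⁻¹ * (X - C (v o)) * Lagrange.basis s v o =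
      nodal s v := by
  have hcancel : C (nodalWeight s v o)⁻¹ * C (nodalWeight s v o) = 1 := by
    rw [← C_mul, inv_mul_cancel₀ (nodalWeight_ne_zero hv ho), C_1]
  rw [basis_eq_C_nodalWeight_mul_nodal_erase, nodal_eq_mul_nodal_erase ho]
  linear_combination (X - C (v o)) * nodal (s.erase o) v * hcancel

theorem sum_C_sub_mul_basis (hv : Set.InjOn v s) (hs : 1 < #s) (x : F) :
    ∑ k ∈ s, C (v k - x) * Lagrange.basis s v k = X - C x := by
  have hdeg : (X - C x).degree < (#s : WithBot ℕ) := by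
    rw [degree_X_sub_C]
    exact_mod_cast hs
  simpa [interpolate_apply] using (eq_interpolate hv hdeg).symm

/-- The matrix polynomial interpolating the values `p k` at the nodes `v k`, `k ∈ s`. -/
noncomputable def matrixInterpolant (s : Finset ι) (v : ι → F) (p : ι → Matrix m n F) :
    Matrix m n F[X] :=
  ∑ k ∈ s, Lagrange.basis s v k • (p k).map C

theorem matrixInterpolant_eq_sum_nodal_erase (p : ι → Matrix m n F) :
    matrixInterpolant s v p =
      ∑ k ∈ s, (C (nodalWeight s v k) * nodal (s.erase k) v) • (p k).map C := by
  simp only [matrixInterpolant, basis_eq_C_nodalWeight_mul_nodal_erase]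

theorem matrixInterpolant_map_eval {p : ι → Matrix m n F} (hv : Set.InjOn v s) (hk : k ∈ s) :
    (matrixInterpolant s v p).map (eval (v k)) = p k := by
  ext i j
  rw [Matrix.map_apply, ← eval_interpolate_at_node (fun l => p l i j) hv hk]
  simp [matrixInterpolant, Matrix.sum_apply, mul_comm]

variable [Fintype m] [DecidableEq m] {p : ι → Matrix m m F}

theorem det_matrixInterpolant_ne_zero (hv : Set.InjOn v s) (hk : k ∈ s) (hp : IsUnit (p k)) :
    (matrixInterpolant s v p).det ≠ 0 := by
  intro hdet
  have heval : (p k).det = eval (v k) (matrixInterpolant s v p).det := by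
    rw [← matrixInterpolant_map_eval (p := p) hv hk, ← coe_evalRingHom, RingHom.map_det]
    rfl
  rw [hdet, eval_zero] at heval
  exact ((Matrix.isUnit_iff_isUnit_det _).1 hp).ne_zero heval

/-- The block `G = (1/β_o)(z - τ_o)·I` at the top of the last column of the Hermite factor `H`. -/
noncomputable def hermiteTopBlock (m : Type*) [DecidableEq m] (s : Finset ι) (v : ι → F) (o : ι) :
    Matrix m m F[X] :=
  (C (nodalWeight s v o)⁻¹ * (X - C (v o))) • 1

/-- The block `U_k = -(β_k/β_o)(τ_k - τ_o)·P_k⁻¹` in the last column of the unimodular factor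
`M`. -/
noncomputable def unimodularColumnBlock (s : Finset ι) (v : ι → F) (p : ι → Matrix m m F)
    (o k : ι) : Matrix m m F :=
  -(nodalWeight s v k / nodalWeight s v o * (v k - v o)) • (p k)⁻¹

/-- The matrix polynomial `β_k G + U_k P`, whose quotient by `-(z - τ_k)` is the block `H_k`. -/
noncomputable def hermiteNumerator (s : Finset ι) (v : ι → F) (p : ι → Matrix m m F) (o k : ι) :
    Matrix m m F[X] :=
  C (nodalWeight s v k) • hermiteTopBlock m s v o +
    (unimodularColumnBlock s v p o k).map C * matrixInterpolant s v p

theorem hermiteNumerator_map_eval (hv : Set.InjOn v s) (hk : k ∈ s) (hp : IsUnit (p k)) :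
    (hermiteNumerator s v p o k).map (eval (v k)) = 0 := by
  have hprod : ((unimodularColumnBlock s v p o k).map C * matrixInterpolant s v p).map
      (evalRingHom (v k)) = unimodularColumnBlock s v p o k * p k := by
    rw [Matrix.map_mul, coe_evalRingHom, matrixInterpolant_map_eval hv hk, Matrix.map_map]
    congr 1
    ext
    simp
  have hinv : (p k)⁻¹ * p k = 1 :=
    Matrix.nonsing_inv_mul _ ((Matrix.isUnit_iff_isUnit_det _).1 hp)
  rw [coe_evalRingHom] at hprod
  rw [hermiteNumerator, Matrix.map_add _ fun _ _ => eval_add, hprod, unimodularColumnBlock,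
    Matrix.smul_mul, hinv]
  ext i j
  by_cases hij : i = j
  · simp only [hermiteTopBlock, neg_smul, hij, Matrix.add_apply, Matrix.map_apply,
      Matrix.smul_apply, Matrix.one_apply_eq, smul_eq_mul, mul_one, eval_mul, eval_C, eval_sub,
      eval_X, Matrix.neg_apply, Matrix.zero_apply]
    ring
  · simp [hermiteTopBlock, hij]

theorem X_sub_C_dvd_hermiteNumerator (hv : Set.InjOn v s) (hk : k ∈ s) (hp : IsUnit (p k))
    (i j : m) : X - C (v k) ∣ hermiteNumerator s v p o k i j :=
  dvd_iff_isRoot.2 (congrFun (congrFun (hermiteNumerator_map_eval hv hk hp) i) j)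

theorem exists_X_sub_C_smul_eq_neg_hermiteNumerator (hv : Set.InjOn v s)
    (hp : ∀ k ∈ s.erase o, IsUnit (p k)) :
    ∃ H : ι → Matrix m m F[X],
      ∀ k ∈ s.erase o, (X - C (v k)) • H k = -hermiteNumerator s v p o k := by
  have hquot : ∀ k : ι, ∃ Hk : Matrix m m F[X],
      k ∈ s.erase o → (X - C (v k)) • Hk = -hermiteNumerator s v p o k := by
    intro k
    by_cases hk : k ∈ s.erase o
    · choose q hq using X_sub_C_dvd_hermiteNumerator (o := o) hv (mem_of_mem_erase hk) (hp k hk)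
      refine ⟨-Matrix.of q, fun _ => ?_⟩
      ext1 i j
      simp [hq]
    · exact ⟨0, fun h => absurd h hk⟩
  exact Classical.axiomOfChoice hquot

theorem nodal_smul_mul_eq_of_X_sub_C_smul_eq (hk : k ∈ s) (hp : IsUnit (p k))
    {H : Matrix m m F[X]} (hH : (X - C (v k)) • H = -hermiteNumerator s v p o k) :
    nodal s v • ((p k).map C * H) =
      C (nodalWeight s v o)⁻¹ •
        ((C (v k - v o) * Lagrange.basis s v k) • matrixInterpolant s v p -
          ((X - C (v o)) * Lagrange.basis s v k) • (p k).map C) := by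
  have hpU : (p k).map C * (unimodularColumnBlock s v p o k).map C =
      (-C (nodalWeight s v k / nodalWeight s v o * (v k - v o))) •
        (1 : Matrix m m F[X]) := by
    rw [← Matrix.map_mul, unimodularColumnBlock, Matrix.mul_smul,
      Matrix.mul_nonsing_inv _ ((Matrix.isUnit_iff_isUnit_det _).1 hp)]
    ext1 i j
    by_cases hij : i = j <;> simp [hij]
  rw [nodal_eq_mul_nodal_erase hk, mul_comm, ← smul_smul, ← Matrix.mul_smul, hH,
    hermiteNumerator, hermiteTopBlock, mul_neg, mul_add, ← mul_assoc, hpU,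
    basis_eq_C_nodalWeight_mul_nodal_erase]
  simp only [Matrix.mul_smul, Matrix.smul_mul, mul_one, one_mul, div_eq_mul_inv, map_mul]
  module

theorem sum_mul_eq_of_X_sub_C_smul_eq (hv : Set.InjOn v s) (ho : o ∈ s) (hs : 1 < #s)
    (hp : ∀ k ∈ s.erase o, IsUnit (p k)) {H : ι → Matrix m m F[X]}
    (hH : ∀ k ∈ s.erase o, (X - C (v k)) • H k = -hermiteNumerator s v p o k) :
    ∑ k ∈ s.erase o, (p k).map C * H k = (p o).map C := by
  let T : ι → Matrix m m F[X] := fun k => C (nodalWeight s v o)⁻¹ •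
    ((C (v k - v o) * Lagrange.basis s v k) • matrixInterpolant s v p -
      ((X - C (v o)) * Lagrange.basis s v k) • (p k).map C)
  have hTo : T o = -(nodal s v • (p o).map C) := by
    simp only [T, ← C_inv_nodalWeight_mul_X_sub_C_mul_basis hv ho, sub_self, C_0]
    module
  have hT : ∑ k ∈ s, T k = 0 := by
    rw [← smul_sum, sum_sub_distrib, ← sum_smul, sum_C_sub_mul_basis hv hs]
    simp only [mul_smul, ← smul_sum]
    rw [← matrixInterpolant, sub_self, smul_zero]
  have hnodal : nodal s v • ∑ k ∈ s.erase o, (p k).map C * H k =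
      nodal s v • (p o).map C := by
    calc nodal s v • ∑ k ∈ s.erase o, (p k).map C * H k
        = ∑ k ∈ s.erase o, T k := by
          rw [smul_sum]
          exact sum_congr rfl fun k hk =>
            nodal_smul_mul_eq_of_X_sub_C_smul_eq (mem_of_mem_erase hk) (hp k hk) (hH k hk)
      _ = -T o := by
          rw [← add_sum_erase s T ho] at hT
          exact eq_neg_of_add_eq_zero_right hT
      _ = nodal s v • (p o).map C := by rw [hTo, neg_neg]
  exact smul_right_injective _ (nodal_ne_zero (s := s) (v := v)) hnodal

end Interpolation

section LagrangePencil

open Finset Lagrange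

theorem range_succ_erase_zero (ℓ : ℕ) : (range (ℓ + 1)).erase 0 = Icc 1 ℓ := by
  rw [Nat.range_succ_eq_Icc_zero, Icc_erase_left]
  rfl

@[to_additive]
theorem prod_univ_erase_zero_sub {A : Type*} [CommMonoid A] (ℓ : ℕ) (f : ℕ → A) :
    ∏ c ∈ (univ : Finset (Fin (ℓ + 2))).erase 0, f (ℓ - (c.val - 1)) =
      ∏ k ∈ range (ℓ + 1), f k := by
  refine prod_nbij' (fun c => ℓ - (c.val - 1)) (fun k => ⟨ℓ + 1 - k, by lia⟩)
    ?_ ?_ ?_ ?_ fun _ _ => rfl <;>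
    simp only [mem_erase, mem_univ, mem_range, ne_eq, Fin.ext_iff, Fin.val_zero] <;> lia

theorem sum_univ_erase_zero_erase_last_sub {A : Type*} [AddCommMonoid A] (ℓ : ℕ) (f : ℕ → A) :
    ∑ c ∈ ((univ : Finset (Fin (ℓ + 2))).erase 0).erase (Fin.last (ℓ + 1)), f (ℓ - (c.val - 1)) =
      ∑ k ∈ (range (ℓ + 1)).erase 0, f k := by
  refine sum_nbij' (fun c => ℓ - (c.val - 1)) (fun k => ⟨ℓ + 1 - k, by lia⟩)
    ?_ ?_ ?_ ?_ fun _ _ => rfl <;>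
    simp only [mem_erase, mem_univ, mem_range, ne_eq, Fin.ext_iff, Fin.val_zero, Fin.val_last] <;>
    lia

variable {m R : Type*} [CommRing R] {ℓ : ℕ} {τ β : ℕ → R} {p U : ℕ → Matrix m m R}

/-- The last block column of the factor `M`, with blocks `U_{ℓ+1-r}` between two zero blocks. -/
noncomputable def unimodularColumn (ℓ : ℕ) (U : ℕ → Matrix m m R) (r : Fin (ℓ + 2)) :
    Matrix m m R[X] :=
  if r.val = 0 ∨ r.val = ℓ + 1 then 0 else (U (ℓ + 1 - r.val)).map C

theorem unimodularColumn_congr {V : ℕ → Matrix m m R}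
    (h : ∀ k ∈ (range (ℓ + 1)).erase 0, U k = V k) :
    unimodularColumn ℓ U = unimodularColumn ℓ V := by
  ext1 r
  unfold unimodularColumn
  split_ifs with hr
  · rfl
  · rw [h _ (mem_erase.2 ⟨by lia, mem_range.2 (by lia)⟩)]

/-- The last block column of the factor `H`, with blocks `H_{ℓ+1-r}` between `G` and `P`. -/
def hermiteColumn (ℓ : ℕ) (G P : Matrix m m R[X]) (H : ℕ → Matrix m m R[X]) (r : Fin (ℓ + 2)) :
    Matrix m m R[X] :=
  if r.val = 0 then G else if r.val = ℓ + 1 then P else H (ℓ + 1 - r.val)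

theorem comp_updateCol_last_unimodularColumn_apply
    (A : Matrix (Fin (ℓ + 2)) (Fin (ℓ + 2)) (Matrix m m R[X])) (r c : Fin (ℓ + 2)) (i j : m) :
    Matrix.comp _ _ _ _ _ (A.updateCol (Fin.last (ℓ + 1)) (unimodularColumn ℓ U)) (r, i) (c, j) =
      if c.val = ℓ + 1 then
        (if r.val = 0 ∨ r.val = ℓ + 1 then 0 else ((U (ℓ + 1 - r.val)).map C) i j)
      else Matrix.comp _ _ _ _ _ A (r, i) (c, j) := by
  simp only [Matrix.comp_apply, Matrix.updateCol_apply, unimodularColumn, Fin.ext_iff, Fin.val_last]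
  split_ifs <;> rfl

variable [DecidableEq m]

/-- The block form of the companion pencil `L` in the Lagrange basis. Block row and column
`c ≥ 1` belong to the node of index `ℓ - (c - 1)`. -/
noncomputable def lagrangePencil (ℓ : ℕ) (τ β : ℕ → R) (p : ℕ → Matrix m m R) :
    Matrix (Fin (ℓ + 2)) (Fin (ℓ + 2)) (Matrix m m R[X]) :=
  blockArrowhead 0 (fun c => (p (ℓ - (c.val - 1))).map C) (fun r => C (β (ℓ - (r.val - 1))))
    fun r => X - C (τ (ℓ - (r.val - 1)))

theorem comp_lagrangePencil_apply (r c : Fin (ℓ + 2)) (i j : m) :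
    Matrix.comp _ _ _ _ _ (lagrangePencil ℓ τ β p) (r, i) (c, j) =
      if r.val = 0 then (if c.val = 0 then 0 else (-(p (ℓ - (c.val - 1))).map C) i j)
      else if c.val = 0 then (if i = j then C (β (ℓ - (r.val - 1))) else 0)
      else if r = c then (if i = j then X - C (τ (ℓ - (r.val - 1))) else 0)
      else 0 := by
  simp only [Matrix.comp_apply, lagrangePencil, blockArrowhead, Matrix.of_apply, Fin.ext_iff,
    Fin.val_zero]
  split_ifs <;> simp [*]

theorem comp_one_updateCol_last_hermiteColumn (G P : Matrix m m R[X]) (H : ℕ → Matrix m m R[X]) :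
    Matrix.comp _ _ _ _ _
        ((1 : Matrix _ _ (Matrix m m R[X])).updateCol (Fin.last (ℓ + 1)) (hermiteColumn ℓ G P H)) =
      Matrix.of fun q r : Fin (ℓ + 2) × m =>
        if r.1.val = ℓ + 1 then
          (if q.1.val = 0 then G q.2 r.2
           else if q.1.val = ℓ + 1 then P q.2 r.2
           else (H (ℓ + 1 - q.1.val)) q.2 r.2)
        else if q.1 = r.1 then (if q.2 = r.2 then 1 else 0) else 0 := by
  ext1 ⟨q, i⟩ ⟨r, j⟩
  have hone := congrFun (congrFun (Matrix.comp_one (I := Fin (ℓ + 2)) (J := m) (R := R[X])) (q, i))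
    (r, j)
  simp only [Matrix.comp_apply, Matrix.one_apply (i := (q, i)), Prod.mk.injEq, ite_and] at hone
  simp only [Matrix.comp_apply, Matrix.updateCol_apply, hermiteColumn, Fin.ext_iff, Fin.val_last,
    Matrix.of_apply] at hone ⊢
  split_ifs <;> simp_all

variable [Fintype m]

theorem det_comp_lagrangePencil :
    (Matrix.comp _ _ _ _ _ (lagrangePencil ℓ τ β p)).det =
      (∑ k ∈ range (ℓ + 1), (C (β k) * nodal ((range (ℓ + 1)).erase k) τ) • (p k).map C).det := by
  have hq : ∀ c : Fin (ℓ + 2), c ≠ 0 → (X - C (τ (ℓ - (c.val - 1)))) *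
      nodal ((range (ℓ + 1)).erase (ℓ - (c.val - 1))) τ = nodal (range (ℓ + 1)) τ :=
    fun c _ => (nodal_eq_mul_nodal_erase (mem_range.2 (by lia))).symm
  have hdet := det_comp_blockArrowhead_mul_pow
    (p := fun c => (p (ℓ - (c.val - 1))).map C) (b := fun r => C (β (ℓ - (r.val - 1)))) hq
  rw [prod_univ_erase_zero_sub ℓ fun k => X - C (τ k), ← nodal_eq,
    sum_univ_erase_zero_sub ℓ fun k =>
      (C (β k) * nodal ((range (ℓ + 1)).erase k) τ) • (p k).map C] at hdet
  exact (nodal_monic.pow _).isRegular.right hdet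

theorem lagrangePencil_updateCol_mul_one_updateCol {G P : Matrix m m R[X]}
    {H : ℕ → Matrix m m R[X]} (hG : C (β 0) • G = (X - C (τ 0)) • 1)
    (hH : ∀ k ∈ (range (ℓ + 1)).erase 0,
      (X - C (τ k)) • H k = -(C (β k) • G + (U k).map C * P))
    (hsum : ∑ k ∈ (range (ℓ + 1)).erase 0, (p k).map C * H k = (p 0).map C) :
    (lagrangePencil ℓ τ β p).updateCol (Fin.last (ℓ + 1)) (unimodularColumn ℓ U) *
        (1 : Matrix _ _ (Matrix m m R[X])).updateCol (Fin.last (ℓ + 1)) (hermiteColumn ℓ G P H) =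
      lagrangePencil ℓ τ β p := by
  have hinner : ∀ c : Fin (ℓ + 2), c ≠ 0 → c ≠ Fin.last (ℓ + 1) →
      c.val ≠ 0 ∧ c.val ≠ ℓ + 1 ∧ ℓ + 1 - c.val = ℓ - (c.val - 1) := by
    intro c h0 hlast
    simp only [ne_eq, Fin.ext_iff, Fin.val_zero, Fin.val_last] at h0 hlast
    lia
  apply blockArrowhead_updateCol_mul_one_updateCol (Fin.last_pos).ne'
  · simp [unimodularColumn]
  · simp [unimodularColumn]
  · rw [← sum_univ_erase_zero_erase_last_sub ℓ fun k => (p k).map C * H k] at hsum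
    convert hsum using 1
    · refine sum_congr rfl fun c hc => ?_
      simp only [mem_erase] at hc
      obtain ⟨h0, hlast, hidx⟩ := hinner c hc.2.1 hc.1
      simp only [hermiteColumn, if_neg h0, if_neg hlast, hidx]
    · simp
  · simpa [hermiteColumn] using hG
  · intro c hc0 hclast
    obtain ⟨h0, hlast, hidx⟩ := hinner c hc0 hclast
    have hres := hH (ℓ - (c.val - 1)) (mem_erase.2 ⟨by lia, mem_range.2 (by lia)⟩)
    simp only [hermiteColumn, unimodularColumn, h0, hlast, hidx, or_self, if_false, hres,
      Fin.val_zero, Fin.val_last, if_true, Nat.add_eq_zero_iff, one_ne_zero, and_false]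
    abel

end LagrangePencil

section HermiteFactorization

open Finset Lagrange

variable {F m : Type*} [Field F] [Fintype m] [DecidableEq m] {ℓ : ℕ} {τ : ℕ → F}
  {p : ℕ → Matrix m m F}

/-- The block form of the factor `M`. -/
noncomputable def unimodularFactor (ℓ : ℕ) (τ : ℕ → F) (p : ℕ → Matrix m m F) :
    Matrix (Fin (ℓ + 2)) (Fin (ℓ + 2)) (Matrix m m F[X]) :=
  (lagrangePencil ℓ τ (nodalWeight (range (ℓ + 1)) τ) p).updateCol (Fin.last (ℓ + 1))
    (unimodularColumn ℓ (unimodularColumnBlock (range (ℓ + 1)) τ p 0))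

/-- The block form of the factor `H`, whose blocks `H_k` are passed as an argument because they are
only determined by the equation `(z - τ_k) H_k = -(β_k G + U_k P)`. -/
noncomputable def hermiteFactor (ℓ : ℕ) (τ : ℕ → F) (p : ℕ → Matrix m m F)
    (H : ℕ → Matrix m m F[X]) : Matrix (Fin (ℓ + 2)) (Fin (ℓ + 2)) (Matrix m m F[X]) :=
  (1 : Matrix _ _ (Matrix m m F[X])).updateCol (Fin.last (ℓ + 1))
    (hermiteColumn ℓ (hermiteTopBlock m (range (ℓ + 1)) τ 0)
      (matrixInterpolant (range (ℓ + 1)) τ p) H)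

theorem det_comp_lagrangePencil_nodalWeight :
    (Matrix.comp _ _ _ _ _ (lagrangePencil ℓ τ (nodalWeight (range (ℓ + 1)) τ) p)).det =
      (matrixInterpolant (range (ℓ + 1)) τ p).det := by
  rw [det_comp_lagrangePencil, matrixInterpolant_eq_sum_nodal_erase]

theorem det_comp_hermiteFactor (H : ℕ → Matrix m m F[X]) :
    (Matrix.comp _ _ _ _ _ (hermiteFactor ℓ τ p H)).det =
      (matrixInterpolant (range (ℓ + 1)) τ p).det := by
  rw [hermiteFactor, det_comp_one_updateCol]
  simp [hermiteColumn]

theorem unimodularFactor_mul_hermiteFactor (hℓ : 1 ≤ ℓ) (hτ : Set.InjOn τ (range (ℓ + 1)))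
    (hp : ∀ k ∈ (range (ℓ + 1)).erase 0, IsUnit (p k)) {H : ℕ → Matrix m m F[X]}
    (hH : ∀ k ∈ (range (ℓ + 1)).erase 0,
      (X - C (τ k)) • H k = -hermiteNumerator (range (ℓ + 1)) τ p 0 k) :
    unimodularFactor ℓ τ p * hermiteFactor ℓ τ p H =
      lagrangePencil ℓ τ (nodalWeight (range (ℓ + 1)) τ) p := by
  have h0 : 0 ∈ range (ℓ + 1) := mem_range.2 ℓ.succ_pos
  refine lagrangePencil_updateCol_mul_one_updateCol ?_ hH
    (sum_mul_eq_of_X_sub_C_smul_eq hτ h0 (by rw [card_range]; lia) hp hH)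
  rw [hermiteTopBlock, smul_smul, ← mul_assoc, ← C_mul,
    mul_inv_cancel₀ (nodalWeight_ne_zero hτ h0), C_1, one_mul]

theorem det_comp_unimodularFactor (hℓ : 1 ≤ ℓ) (hτ : Set.InjOn τ (range (ℓ + 1)))
    (hp : ∀ k ∈ (range (ℓ + 1)).erase 0, IsUnit (p k)) :
    (Matrix.comp _ _ _ _ _ (unimodularFactor ℓ τ p)).det = 1 := by
  obtain ⟨H, hH⟩ := exists_X_sub_C_smul_eq_neg_hermiteNumerator hτ hp
  have h1 : 1 ∈ (range (ℓ + 1)).erase 0 := mem_erase.2 ⟨one_ne_zero, mem_range.2 (by lia)⟩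
  refine mul_right_cancel₀ (det_matrixInterpolant_ne_zero hτ (mem_of_mem_erase h1) (hp 1 h1)) ?_
  rw [one_mul, ← det_comp_hermiteFactor H, ← det_comp_mul,
    unimodularFactor_mul_hermiteFactor hℓ hτ hp hH, det_comp_lagrangePencil_nodalWeight,
    det_comp_hermiteFactor]

theorem lagrange_pencil_hermite_factorization_general
    {F m : Type*} [Field F] [Fintype m] [DecidableEq m] (ℓ : ℕ) (hℓ : 1 ≤ ℓ)
    (τ : ℕ → F) (hτ : ∀ j ≤ ℓ, ∀ k ≤ ℓ, j ≠ k → τ j ≠ τ k)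
    (β : ℕ → F)
    (hβ : ∀ k ≤ ℓ, β k = ∏ j ∈ (range (ℓ + 1)).erase k, (τ k - τ j)⁻¹)
    (Pv : ℕ → Matrix m m F)
    (hPv : ∀ k, 1 ≤ k → k ≤ ℓ → IsUnit (Pv k))
    (P : Matrix m m F[X])
    (hP : P = ∑ k ∈ range (ℓ + 1),
      (C (β k) * ∏ j ∈ (range (ℓ + 1)).erase k, (X - C (τ j))) •
        (Pv k).map C)
    (G : Matrix m m F[X])
    (hG : G = (C (β 0)⁻¹ * (X - C (τ 0))) • (1 : Matrix m m F[X]))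
    (U : ℕ → Matrix m m F)
    (hU : ∀ k, 1 ≤ k → k ≤ ℓ → U k = -((β k / β 0) * (τ k - τ 0)) • (Pv k)⁻¹)
    (L M : Matrix (Fin (ℓ + 2) × m) (Fin (ℓ + 2) × m) F[X])
    (hL : ∀ r c : Fin (ℓ + 2), ∀ s t : m, L (r, s) (c, t) =
      if r.val = 0 then
        (if c.val = 0 then 0 else (-(Pv (ℓ - (c.val - 1))).map C) s t)
      else if c.val = 0 then (if s = t then C (β (ℓ - (r.val - 1))) else 0)
      else if r = c then (if s = t then X - C (τ (ℓ - (r.val - 1))) else 0)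
      else 0)
    (hM : ∀ r c : Fin (ℓ + 2), ∀ s t : m, M (r, s) (c, t) =
      if c.val = ℓ + 1 then
        (if r.val = 0 ∨ r.val = ℓ + 1 then 0 else ((U (ℓ + 1 - r.val)).map C) s t)
      else L (r, s) (c, t)) :
    (∀ k, 1 ≤ k → k ≤ ℓ → ∀ s t : m,
      (X - C (τ k)) ∣ ((C (β k) • G + (U k).map C * P) s t)) ∧
    (∀ Hk : ℕ → Matrix m m F[X],
      (∀ k, 1 ≤ k → k ≤ ℓ →
        (X - C (τ k)) • Hk k = -(C (β k) • G + (U k).map C * P)) →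
      (M * (Matrix.of fun q r : Fin (ℓ + 2) × m =>
          if r.1.val = ℓ + 1 then
            (if q.1.val = 0 then G q.2 r.2
             else if q.1.val = ℓ + 1 then P q.2 r.2
             else (Hk (ℓ + 1 - q.1.val)) q.2 r.2)
          else if q.1 = r.1 then (if q.2 = r.2 then 1 else 0) else 0) = L) ∧
      ∑ k ∈ Icc 1 ℓ, (Pv k).map C * Hk k = (Pv 0).map C) ∧
    (∃ c : F, c ≠ 0 ∧ M.det = C c) := by
  have forall_mem_erase {q : ℕ → Prop} :
      (∀ k ∈ (range (ℓ + 1)).erase 0, q k) ↔ ∀ k, 1 ≤ k → k ≤ ℓ → q k := by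
    simp only [range_succ_erase_zero, mem_Icc, and_imp]
  rw [← forall_mem_erase] at hPv hU
  have hinj : Set.InjOn τ (range (ℓ + 1)) := fun j hj k hk hjk => by_contra fun hne =>
    hτ j (mem_range_succ_iff.1 hj) k (mem_range_succ_iff.1 hk) hne hjk
  have h0 : 0 ∈ range (ℓ + 1) := mem_range.2 ℓ.succ_pos
  replace hβ : ∀ k ∈ range (ℓ + 1), β k = nodalWeight (range (ℓ + 1)) τ k := fun k hk =>
    hβ k (mem_range_succ_iff.1 hk)
  replace hG : G = hermiteTopBlock m (range (ℓ + 1)) τ 0 := by rw [hG, hβ 0 h0, hermiteTopBlock]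
  replace hU : ∀ k ∈ (range (ℓ + 1)).erase 0,
      U k = unimodularColumnBlock (range (ℓ + 1)) τ Pv 0 k := fun k hk => by
    rw [hU k hk, hβ k (mem_of_mem_erase hk), hβ 0 h0, unimodularColumnBlock]
  replace hP : P = matrixInterpolant (range (ℓ + 1)) τ Pv := by
    rw [hP, matrixInterpolant_eq_sum_nodal_erase]
    exact sum_congr rfl fun k hk => by rw [hβ k hk, nodal_eq]
  replace hL : L = Matrix.comp _ _ _ _ _
      (lagrangePencil ℓ τ (nodalWeight (range (ℓ + 1)) τ) Pv) := by
    ext1 ⟨r, i⟩ ⟨c, j⟩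
    rw [hL, comp_lagrangePencil_apply, hβ _ (mem_range_succ_iff.2 (Nat.sub_le ..))]
  replace hM : M = Matrix.comp _ _ _ _ _ (unimodularFactor ℓ τ Pv) := by
    ext1 ⟨r, i⟩ ⟨c, j⟩
    rw [hM, hL, unimodularFactor, ← unimodularColumn_congr hU,
      comp_updateCol_last_unimodularColumn_apply]
  have hnum : ∀ k ∈ (range (ℓ + 1)).erase 0,
      C (β k) • G + (U k).map C * P = hermiteNumerator (range (ℓ + 1)) τ Pv 0 k := fun k hk => by
    rw [hU k hk, hG, hP, hβ k (mem_of_mem_erase hk), hermiteNumerator]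
  refine ⟨forall_mem_erase.1 fun k hk => ?_, fun Hk hHk => ?_, 1, one_ne_zero, ?_⟩
  · rw [hnum k hk]
    exact X_sub_C_dvd_hermiteNumerator hinj (mem_of_mem_erase hk) (hPv k hk)
  · rw [← forall_mem_erase] at hHk
    replace hHk := fun k hk => (hHk k hk).trans (congrArg Neg.neg (hnum k hk))
    rw [← comp_one_updateCol_last_hermiteColumn, hM, hL, hG, hP, ← range_succ_erase_zero,
      ← unimodularFactor_mul_hermiteFactor hℓ hinj hPv hHk]
    exact ⟨(map_mul (Matrix.compRingEquiv _ m F[X]) _ _).symm,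
      sum_mul_eq_of_X_sub_C_smul_eq hinj h0 (by rw [card_range]; lia) hPv hHk⟩
  · rw [hM, det_comp_unimodularFactor hℓ hinj hPv, C_1]

end HermiteFactorization

/-- The Hermite-normal-form-style factorization `M(z)·H(z) = L(z)` of
the Lagrange-basis companion pencil of `P(z) = Σ_{k=0}^ℓ P_k w_k(z)` on `ℓ+1`
distinct nodes with all values `P_k` invertible.  Blocks are encoded on
`Fin (ℓ+2) × Fin n`, block index first.  Here `G = (1/β₀)(z−τ₀)·I_n`,
`U_k = −(β_k/β₀)(τ_k−τ₀)·P_k⁻¹`, each `β_k G + U_k P(z)` is divisible by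
`z−τ_k`, and `H_k(z) = −(β_k G + U_k P(z))/(z−τ_k)` (characterized below by
`(z−τ_k)·H_k = −(β_k G + U_k P)`); moreover `Σ_{k=1}^ℓ P_k H_k = P_0` and
`det M` is a nonzero constant. -/
theorem lagrange_pencil_hermite_factorization
    {F : Type*} [Field F] (n ℓ : ℕ) (hn : 1 ≤ n) (hℓ : 1 ≤ ℓ)
    (τ : ℕ → F) (hτ : ∀ j ≤ ℓ, ∀ k ≤ ℓ, j ≠ k → τ j ≠ τ k)
    (β : ℕ → F)
    (hβ : ∀ k ≤ ℓ, β k = ∏ j ∈ (Finset.range (ℓ + 1)).erase k, (τ k - τ j)⁻¹)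
    (Pv : ℕ → Matrix (Fin n) (Fin n) F)
    (hPv : ∀ k ≤ ℓ, IsUnit (Pv k))
    (P : Matrix (Fin n) (Fin n) (Polynomial F))
    (hP : P = ∑ k ∈ Finset.range (ℓ + 1),
      (C (β k) * ∏ j ∈ (Finset.range (ℓ + 1)).erase k, (X - C (τ j))) •
        (Pv k).map C)
    (G : Matrix (Fin n) (Fin n) (Polynomial F))
    (hG : G = (C (β 0)⁻¹ * (X - C (τ 0))) • (1 : Matrix (Fin n) (Fin n) (Polynomial F)))
    (U : ℕ → Matrix (Fin n) (Fin n) F)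
    (hU : ∀ k, 1 ≤ k → k ≤ ℓ → U k = -((β k / β 0) * (τ k - τ 0)) • (Pv k)⁻¹)
    (L M : Matrix (Fin (ℓ + 2) × Fin n) (Fin (ℓ + 2) × Fin n) (Polynomial F))
    (hL : ∀ r c : Fin (ℓ + 2), ∀ s t : Fin n, L (r, s) (c, t) =
      if r.val = 0 then
        (if c.val = 0 then 0 else (-(Pv (ℓ - (c.val - 1))).map C) s t)
      else if c.val = 0 then (if s = t then C (β (ℓ - (r.val - 1))) else 0)
      else if r = c then (if s = t then X - C (τ (ℓ - (r.val - 1))) else 0)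
      else 0)
    (hM : ∀ r c : Fin (ℓ + 2), ∀ s t : Fin n, M (r, s) (c, t) =
      if c.val = ℓ + 1 then
        (if r.val = 0 ∨ r.val = ℓ + 1 then 0 else ((U (ℓ + 1 - r.val)).map C) s t)
      else L (r, s) (c, t)) :
    (∀ k, 1 ≤ k → k ≤ ℓ → ∀ s t : Fin n,
      (X - C (τ k)) ∣ ((C (β k) • G + (U k).map C * P) s t)) ∧
    (∀ Hk : ℕ → Matrix (Fin n) (Fin n) (Polynomial F),
      (∀ k, 1 ≤ k → k ≤ ℓ →
        (X - C (τ k)) • Hk k = -(C (β k) • G + (U k).map C * P)) →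
      (M * (Matrix.of fun q r : Fin (ℓ + 2) × Fin n =>
          if r.1.val = ℓ + 1 then
            (if q.1.val = 0 then G q.2 r.2
             else if q.1.val = ℓ + 1 then P q.2 r.2
             else (Hk (ℓ + 1 - q.1.val)) q.2 r.2)
          else if q.1 = r.1 then (if q.2 = r.2 then 1 else 0) else 0) = L) ∧
      ∑ k ∈ Finset.Icc 1 ℓ, (Pv k).map C * Hk k = (Pv 0).map C) ∧
    (∃ c : F, c ≠ 0 ∧ M.det = C c) := by
  exact lagrange_pencil_hermite_factorization_general ℓ hℓ τ hτ β hβ Pv (fun k _ => hPv k) P hP G hG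
    U hU L M hL hM
end

section
/- Let F be a field, n ≥ 1, and let A, B be n×n matrices over the polynomial ring F[z]. Then A and B are equivalent over F[z] (i.e., there exist matrices U, V invertible over F[z] with A = U·B·V) if and only if for every irreducible polynomial f ∈ F[z], the images of A and B in the n×n matrices over the localization F[z]_f are equivalent over F[z]_f, where F[z]_f denotes the localization of F[z] at the multiplicative set of all polynomials relatively prime to f (equivalently, the localization at the prime ideal generated by f). -/
open Polynomial

/-!
Let `R` be a principal ideal domain and let `d` generate the ideal spanned by the entries of a
nonzero matrix `A`. Among the values of the bilinear form `(x, y) ↦ x ⬝ᵥ A *ᵥ y` one is `d` itself,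
and completing the corresponding `x` and `y` to invertible matrices makes `A` equivalent to
`d • (1 ⊕ D)`. If `A` and `B` are locally equivalent, their entry ideals agree at every maximal
ideal, hence agree, so that `B` is equivalent to `d • (1 ⊕ E)` with the same `d`. Over a local ring
the block `1` can be cancelled, so `D` and `E` are again locally equivalent, and induction on the
size concludes.
-/

open Matrix

theorem exists_forall_dvd_imp_dvd {R ι : Type*} [CommRing R] [IsNoetherianRing R] [Nonempty ι]
    (a : ι → R) : ∃ i, ∀ j, a j ∣ a i → a i ∣ a j := by
  obtain ⟨_, ⟨i, rfl⟩, hmax⟩ := (wellFounded_gt (α := Ideal R)).has_min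
    (Set.range fun i => Ideal.span {a i}) (Set.range_nonempty _)
  refine ⟨i, fun j hji => ?_⟩
  rw [← Ideal.span_singleton_le_span_singleton] at hji ⊢
  exact (hji.eq_of_not_lt (hmax _ ⟨j, rfl⟩)).ge

section LinearForms

variable {R M N : Type*} [CommRing R] [IsPrincipalIdealRing R]
  [AddCommMonoid M] [Module R M] [AddCommMonoid N] [Module R N]

theorem dvd_apply_of_forall_dvd_imp_dvd (φ : M →ₗ[R] R) {x : M}
    (hx : ∀ x', φ x' ∣ φ x → φ x ∣ φ x') (x' : M) : φ x ∣ φ x' := by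
  obtain ⟨g, hg⟩ := IsPrincipalIdealRing.principal (LinearMap.range φ)
  have g_dvd (z : M) : g ∣ φ z :=
    Ideal.mem_span_singleton.mp (hg.le (LinearMap.mem_range_self φ z))
  obtain ⟨z, rfl⟩ : g ∈ LinearMap.range φ := hg ▸ Submodule.mem_span_singleton_self g
  exact (hx z (g_dvd x)).trans (g_dvd x')

theorem exists_forall_apply_dvd_apply (β : M →ₗ[R] N →ₗ[R] R) :
    ∃ x y, ∀ x' y', β x y ∣ β x' y' := by
  obtain ⟨⟨x, y⟩, hmin⟩ := exists_forall_dvd_imp_dvd fun p : M × N => β p.1 p.2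
  have dvd_right {w : M} (hw : β w y = β x y) (y' : N) : β x y ∣ β w y' :=
    hw ▸ dvd_apply_of_forall_dvd_imp_dvd (β w) (fun z => hw ▸ hmin (w, z)) y'
  have dvd_left (x' : M) : β x y ∣ β x' y :=
    dvd_apply_of_forall_dvd_imp_dvd (β.flip y) (fun z => hmin (z, y)) x'
  refine ⟨x, y, fun u v => ?_⟩
  obtain ⟨c, hc⟩ := dvd_left u
  -- Translating `u` along `x` gives a vector at which `β · y` again takes the minimal value.
  let w := u + (1 - c) • x
  have hw : β w y = β x y := by
    simp only [w, map_add, map_smul, LinearMap.add_apply, LinearMap.smul_apply, smul_eq_mul, hc]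
    ring
  have hu : β u v = β w v - (1 - c) * β x v := by simp [w]
  exact hu ▸ dvd_sub (dvd_right hw v) ((dvd_right rfl v).mul_left _)

end LinearForms

section Completion

variable {ι R M : Type*} [CommRing R] [IsDomain R] [IsPrincipalIdealRing R]
  [AddCommGroup M] [Module R M]

theorem exists_basis_apply_eq [Finite ι] (b : Module.Basis ι R M) {φ : M →ₗ[R] R} {x : M}
    (hx : φ x = 1) (i : ι) : ∃ b' : Module.Basis ι R M, b' i = x := by
  classical
  obtain ⟨k, c⟩ := Submodule.basisOfPid b (LinearMap.ker φ)
  let b₁ : Module.Basis (Fin (k + 1)) R M := Module.Basis.mkFinCons x c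
    (fun r z hz h => by simpa [hx, LinearMap.mem_ker.mp hz] using congrArg φ h)
    (fun z => ⟨-φ z, by simp [hx]⟩)
  let e : Fin (k + 1) ≃ ι := b₁.indexEquiv b
  refine ⟨b₁.reindex (e.trans (Equiv.swap (e 0) i)), ?_⟩
  simp [b₁]

theorem exists_isUnit_col_eq [Fintype ι] [DecidableEq ι] {v w : ι → R} (h : w ⬝ᵥ v = 1) (i : ι) :
    ∃ V : Matrix ι ι R, IsUnit V ∧ V.col i = v := by
  obtain ⟨b, hb⟩ := exists_basis_apply_eq (Pi.basisFun R ι)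
    (φ := dotProductBilin R R w) (x := v) h i
  let := (Pi.basisFun R ι).invertibleToMatrix b
  refine ⟨(Pi.basisFun R ι).toMatrix b, isUnit_of_invertible _, ?_⟩
  ext j
  simp [Module.Basis.toMatrix_apply, hb]

theorem exists_isUnit_row_eq [Fintype ι] [DecidableEq ι] {v w : ι → R} (h : v ⬝ᵥ w = 1) (i : ι) :
    ∃ U : Matrix ι ι R, IsUnit U ∧ U.row i = v := by
  obtain ⟨V, hV, hcol⟩ := exists_isUnit_col_eq ((dotProduct_comm w v).trans h) i
  exact ⟨Vᵀ, isUnit_transpose V |>.mpr hV, hcol⟩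

end Completion

/-- Equivalence of rectangular matrices: `A = U * B * V` with `U` and `V` invertible. -/
def MatrixEquivalent {m n R : Type*} [Fintype m] [DecidableEq m] [Fintype n] [DecidableEq n]
    [CommRing R] (A B : Matrix m n R) : Prop :=
  ∃ (U : Matrix m m R) (V : Matrix n n R), IsUnit U ∧ IsUnit V ∧ A = U * B * V

/-- The block sum `1 ⊕ A` of the `1 × 1` identity matrix and `A`. -/
abbrev oneBlock {m n R : Type*} [CommRing R] (A : Matrix m n R) :
    Matrix (Unit ⊕ m) (Unit ⊕ n) R :=
  fromBlocks 1 0 0 A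

/-- The ideal generated by the entries of a matrix; it is the first determinantal ideal, and an
invariant of equivalence. -/
def entryIdeal {m n R : Type*} [CommRing R] (A : Matrix m n R) : Ideal R :=
  Ideal.span (Set.range fun ij : m × n => A ij.1 ij.2)

section EntryIdeal

variable {m n R S : Type*} [CommRing R] [CommRing S]

theorem entryIdeal_le_iff {A : Matrix m n R} {I : Ideal R} :
    entryIdeal A ≤ I ↔ ∀ i j, A i j ∈ I := by
  simp [entryIdeal, Ideal.span_le, Set.range_subset_iff]

theorem apply_mem_entryIdeal (A : Matrix m n R) (i : m) (j : n) : A i j ∈ entryIdeal A :=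
  entryIdeal_le_iff.mp le_rfl i j

theorem entryIdeal_eq_bot_iff {A : Matrix m n R} : entryIdeal A = ⊥ ↔ A = 0 := by
  simp [← le_bot_iff, entryIdeal_le_iff, ← Matrix.ext_iff]

theorem entryIdeal_map (A : Matrix m n R) (φ : R →+* S) :
    entryIdeal (A.map φ) = (entryIdeal A).map φ := by
  rw [entryIdeal, entryIdeal, Ideal.map_span, ← Set.range_comp]
  rfl

theorem entryIdeal_mul_le_right {l : Type*} [Fintype m] (U : Matrix l m R) (A : Matrix m n R) :
    entryIdeal (U * A) ≤ entryIdeal A :=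
  entryIdeal_le_iff.mpr fun _ j =>
    Ideal.sum_mem _ fun k _ => Ideal.mul_mem_left _ _ (apply_mem_entryIdeal A k j)

theorem entryIdeal_mul_le_left {l : Type*} [Fintype n] (A : Matrix m n R) (V : Matrix n l R) :
    entryIdeal (A * V) ≤ entryIdeal A :=
  entryIdeal_le_iff.mpr fun i _ =>
    Ideal.sum_mem _ fun k _ => Ideal.mul_mem_right _ _ (apply_mem_entryIdeal A i k)

theorem exists_dotProduct_mulVec_eq [IsPrincipalIdealRing R] [Fintype m] [Fintype n]
    {A : Matrix m n R} {d : R} (hd : d ∈ entryIdeal A) : ∃ x y, x ⬝ᵥ A *ᵥ y = d := by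
  classical
  obtain ⟨x, y, hdvd⟩ := exists_forall_apply_dvd_apply (toLinearMap₂' R A)
  have hle : entryIdeal A ≤ Ideal.span {x ⬝ᵥ A *ᵥ y} := entryIdeal_le_iff.mpr fun i j => by
    simpa [Ideal.mem_span_singleton, toLinearMap₂'_apply'] using
      hdvd (Pi.single i 1) (Pi.single j 1)
  obtain ⟨c, rfl⟩ := Ideal.mem_span_singleton.mp (hle hd)
  exact ⟨x, c • y, by rw [mulVec_smul, dotProduct_smul, smul_eq_mul, mul_comm]⟩

end EntryIdeal

theorem exists_eq_fromBlocks {l m n o R : Type*} (M : Matrix (n ⊕ o) (l ⊕ m) R) :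
    ∃ A B C D, M = fromBlocks A B C D :=
  ⟨_, _, _, _, (fromBlocks_toBlocks M).symm⟩

theorem exists_isUnit_add_mul {R : Type*} [CommRing R] [IsLocalRing R] {a b : R}
    (h : IsCoprime a b) : ∃ t, IsUnit (a + b * t) := by
  obtain ⟨u, v, huv⟩ := h
  rcases IsLocalRing.isUnit_or_isUnit_of_add_one huv with ha | hb
  · exact ⟨0, by simpa using isUnit_of_mul_isUnit_right ha⟩
  · obtain ⟨t, ht⟩ := (isUnit_of_mul_isUnit_right hb).dvd (a := 1 - a)
    exact ⟨t, by simp [← ht]⟩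

namespace MatrixEquivalent

variable {m n R : Type*} [Fintype m] [DecidableEq m] [Fintype n] [DecidableEq n] [CommRing R]

theorem refl (A : Matrix m n R) : MatrixEquivalent A A :=
  ⟨1, 1, isUnit_one, isUnit_one, by simp⟩

theorem symm {A B : Matrix m n R} (h : MatrixEquivalent A B) : MatrixEquivalent B A := by
  obtain ⟨_, _, ⟨U, rfl⟩, ⟨V, rfl⟩, rfl⟩ := h
  refine ⟨↑U⁻¹, ↑V⁻¹, Units.isUnit _, Units.isUnit _, ?_⟩
  simp [Matrix.mul_assoc]

theorem trans {A B C : Matrix m n R} (hAB : MatrixEquivalent A B) (hBC : MatrixEquivalent B C) :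
    MatrixEquivalent A C := by
  obtain ⟨U, V, hU, hV, rfl⟩ := hAB
  obtain ⟨U', V', hU', hV', rfl⟩ := hBC
  exact ⟨U * U', V' * V, hU.mul hU', hV'.mul hV, by simp only [Matrix.mul_assoc]⟩

theorem iff_exists_mul_eq_mul {A B : Matrix m n R} : MatrixEquivalent A B ↔
    ∃ (U : Matrix m m R) (V : Matrix n n R), IsUnit U ∧ IsUnit V ∧ U * A = B * V := by
  constructor
  · rintro ⟨_, V, ⟨U, rfl⟩, hV, rfl⟩
    exact ⟨↑U⁻¹, V, U⁻¹.isUnit, hV, by simp [← Matrix.mul_assoc]⟩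
  · rintro ⟨_, V, ⟨U, rfl⟩, hV, h⟩
    exact ⟨↑U⁻¹, V, U⁻¹.isUnit, hV, by simp [Matrix.mul_assoc, ← h, ← Matrix.mul_assoc _ _ A]⟩

theorem map {S : Type*} [CommRing S] {A B : Matrix m n R} (h : MatrixEquivalent A B)
    (φ : R →+* S) : MatrixEquivalent (A.map φ) (B.map φ) := by
  obtain ⟨U, V, hU, hV, rfl⟩ := h
  exact ⟨φ.mapMatrix U, φ.mapMatrix V, hU.map _, hV.map _, by simp [Matrix.map_mul]⟩

theorem smul {A B : Matrix m n R} (h : MatrixEquivalent A B) (c : R) :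
    MatrixEquivalent (c • A) (c • B) := by
  obtain ⟨U, V, hU, hV, rfl⟩ := h
  exact ⟨U, V, hU, hV, by simp⟩

theorem of_smul [IsDomain R] {A B : Matrix m n R} {c : R} (hc : c ≠ 0)
    (h : MatrixEquivalent (c • A) (c • B)) : MatrixEquivalent A B := by
  obtain ⟨U, V, hU, hV, h⟩ := h
  refine ⟨U, V, hU, hV, smul_right_injective _ hc ?_⟩
  simpa using h

theorem reindex {m' n' : Type*} [Fintype m'] [DecidableEq m'] [Fintype n'] [DecidableEq n']
    {A B : Matrix m n R} (h : MatrixEquivalent A B) (e : m ≃ m') (f : n ≃ n') :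
    MatrixEquivalent (A.reindex e f) (B.reindex e f) := by
  obtain ⟨U, V, hU, hV, rfl⟩ := h
  exact ⟨U.reindex e e, V.reindex f f, (isUnit_submatrix_equiv _ _).mpr hU,
    (isUnit_submatrix_equiv _ _).mpr hV, by simp [submatrix_mul_equiv]⟩

theorem entryIdeal_eq {A B : Matrix m n R} (h : MatrixEquivalent A B) :
    entryIdeal A = entryIdeal B := by
  have entryIdeal_le {A B : Matrix m n R} (h : MatrixEquivalent A B) :
      entryIdeal A ≤ entryIdeal B := by
    obtain ⟨U, V, -, -, rfl⟩ := h
    exact (entryIdeal_mul_le_left _ V).trans (entryIdeal_mul_le_right U B)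
  exact (entryIdeal_le h).antisymm (entryIdeal_le h.symm)

theorem congr_oneBlock {A B : Matrix m n R} (h : MatrixEquivalent A B) :
    MatrixEquivalent (oneBlock A) (oneBlock B) := by
  obtain ⟨U, V, hU, hV, rfl⟩ := h
  exact ⟨oneBlock U, oneBlock V,
    isUnit_fromBlocks_zero₁₂.mpr ⟨isUnit_one, hU⟩,
    isUnit_fromBlocks_zero₁₂.mpr ⟨isUnit_one, hV⟩, by simp [fromBlocks_multiply]⟩

theorem exists_oneBlock_of_toBlocks₁₁_eq_one {A : Matrix (Unit ⊕ m) (Unit ⊕ n) R}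
    (hA : A.toBlocks₁₁ = 1) : ∃ D : Matrix m n R, MatrixEquivalent A (oneBlock D) := by
  obtain ⟨b, c, D, rfl⟩ : ∃ b c D, A = fromBlocks 1 b c D :=
    ⟨_, _, _, hA ▸ (fromBlocks_toBlocks A).symm⟩
  exact ⟨D - c * b, fromBlocks 1 0 c 1, fromBlocks 1 b 0 1,
    isUnit_fromBlocks_zero₁₂.mpr ⟨isUnit_one, isUnit_one⟩,
    isUnit_fromBlocks_zero₂₁.mpr ⟨isUnit_one, isUnit_one⟩, by simp [fromBlocks_multiply]⟩

section PrincipalIdealDomain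

variable [IsDomain R] [IsPrincipalIdealRing R]

theorem exists_apply_eq_one {A : Matrix m n R} {x : m → R} {y : n → R}
    (h : x ⬝ᵥ A *ᵥ y = 1) (i : m) (j : n) :
    ∃ B : Matrix m n R, MatrixEquivalent A B ∧ B i j = 1 := by
  obtain ⟨U, hU, hrow⟩ := exists_isUnit_row_eq h i
  obtain ⟨V, hV, hcol⟩ := exists_isUnit_col_eq ((dotProduct_mulVec x A y).symm.trans h) j
  refine ⟨U * A * V, symm ⟨U, V, hU, hV, rfl⟩, ?_⟩
  calc (U * A * V) i j = U.row i ⬝ᵥ A *ᵥ V.col j := by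
        rw [Matrix.mul_assoc]; rfl
    _ = 1 := by rw [hrow, hcol, h]

theorem exists_smul_oneBlock {A : Matrix (Unit ⊕ m) (Unit ⊕ n) R} {d : R} (hd : d ≠ 0)
    (hA : entryIdeal A = Ideal.span {d}) :
    ∃ D : Matrix m n R, MatrixEquivalent A (d • oneBlock D) := by
  have hdvd (i j) : d ∣ A i j :=
    Ideal.mem_span_singleton.mp (hA ▸ apply_mem_entryIdeal A i j)
  choose N hN using hdvd
  obtain rfl : A = d • of N := Matrix.ext hN
  obtain ⟨x, y, hxy⟩ := exists_dotProduct_mulVec_eq (hA ▸ Ideal.mem_span_singleton_self d)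
  have hxy_one : x ⬝ᵥ of N *ᵥ y = 1 := by
    rw [smul_mulVec, dotProduct_smul, smul_eq_mul] at hxy
    exact mul_left_cancel₀ hd (hxy.trans (mul_one d).symm)
  obtain ⟨B, hNB, hB⟩ := exists_apply_eq_one hxy_one (Sum.inl ()) (Sum.inl ())
  obtain ⟨D, hBD⟩ := exists_oneBlock_of_toBlocks₁₁_eq_one (A := B) (Matrix.ext fun _ _ => hB)
  exact ⟨D, (hNB.trans hBD).smul d⟩

end PrincipalIdealDomain

section Cancellation

variable {A B : Matrix m n R} {U : Matrix (Unit ⊕ m) (Unit ⊕ m) R}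
  {V : Matrix (Unit ⊕ n) (Unit ⊕ n) R}

theorem of_isUnit_toBlocks₁₁ (hU : IsUnit U) (hV : IsUnit V)
    (h : U * oneBlock A = oneBlock B * V) (hU₁₁ : IsUnit U.toBlocks₁₁) :
    MatrixEquivalent A B := by
  obtain ⟨p, q, r, s, rfl⟩ := exists_eq_fromBlocks U
  obtain ⟨p', q', r', s', rfl⟩ := exists_eq_fromBlocks V
  obtain ⟨rfl, hq, rfl, hs⟩ : p = p' ∧ q * A = q' ∧ r = B * r' ∧ s * A = B * s' := by
    simpa [fromBlocks_multiply] using h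
  let : Invertible p := hU₁₁.invertible
  -- The two Schur complements of `p` intertwine `A` and `B`.
  refine iff_exists_mul_eq_mul.mpr ⟨_, _, isUnit_fromBlocks_iff_of_invertible₁₁.mp hU,
    isUnit_fromBlocks_iff_of_invertible₁₁.mp hV, ?_⟩
  simp only [Matrix.sub_mul, Matrix.mul_sub, Matrix.mul_assoc, hq, hs]

theorem exists_isCoprime_toBlocks₁₁ (hU : IsUnit U) (hV : IsUnit V)
    (h : U * oneBlock A = oneBlock B * V) : ∃ y : Matrix n Unit R,
      IsCoprime (U.toBlocks₁₁ () ()) ((U.toBlocks₁₂ * (A * y)) () ()) := by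
  obtain ⟨U', hUU', hU'U⟩ := isUnit_iff_exists.mp hU
  obtain ⟨V', hVV', -⟩ := isUnit_iff_exists.mp hV
  have hinv : U' * oneBlock B = oneBlock A * V' := calc
    U' * oneBlock B = U' * (oneBlock B * V) * V' := by
      simp only [Matrix.mul_assoc, hVV', Matrix.mul_one]
    _ = oneBlock A * V' := by rw [← h, ← Matrix.mul_assoc, hU'U, Matrix.one_mul]
  obtain ⟨p, q, _, _, rfl⟩ := exists_eq_fromBlocks U
  obtain ⟨p', _, r', _, rfl⟩ := exists_eq_fromBlocks U'
  obtain ⟨_, _, y, _, rfl⟩ := exists_eq_fromBlocks V'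
  obtain ⟨-, -, rfl, -⟩ : _ ∧ _ ∧ r' = A * y ∧ _ := by simpa [fromBlocks_multiply] using hinv
  have hone : p * p' + q * (A * y) = 1 := by
    rw [fromBlocks_multiply, ← fromBlocks_one, fromBlocks_inj] at hUU'
    exact hUU'.1
  refine ⟨y, p' () (), 1, ?_⟩
  simpa [Matrix.mul_apply, mul_comm] using congrFun₂ hone () ()

theorem of_oneBlock [IsLocalRing R]
    (h : MatrixEquivalent (oneBlock A) (oneBlock B)) : MatrixEquivalent A B := by
  obtain ⟨U, V, hU, hV, hUV⟩ := iff_exists_mul_eq_mul.mp h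
  obtain ⟨y, hy⟩ := exists_isCoprime_toBlocks₁₁ hU hV hUV
  obtain ⟨t, ht⟩ := exists_isUnit_add_mul hy
  -- Adding multiples of the columns of `U` to its first one makes the corner invertible.
  let E : Matrix (Unit ⊕ m) (Unit ⊕ m) R := fromBlocks 1 0 (A * t • y) 1
  let G : Matrix (Unit ⊕ n) (Unit ⊕ n) R := fromBlocks 1 0 (t • y) 1
  have hE : IsUnit E := isUnit_fromBlocks_zero₁₂.mpr ⟨isUnit_one, isUnit_one⟩
  have hG : IsUnit G := isUnit_fromBlocks_zero₁₂.mpr ⟨isUnit_one, isUnit_one⟩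
  have hEG : E * oneBlock A = oneBlock A * G := by simp [E, G, fromBlocks_multiply]
  refine of_isUnit_toBlocks₁₁ (hU.mul hE) (hV.mul hG) ?_ ?_
  · rw [Matrix.mul_assoc, hEG, ← Matrix.mul_assoc, hUV, Matrix.mul_assoc]
  · have hcorner : (U * E).toBlocks₁₁ = U.toBlocks₁₁ + t • (U.toBlocks₁₂ * (A * y)) := by
      conv_lhs => rw [← fromBlocks_toBlocks U]
      simp [E, fromBlocks_multiply]
    rw [isUnit_iff_isUnit_det, det_unique, hcorner]
    simpa [mul_comm t] using ht

end Cancellation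

end MatrixEquivalent

/-- Equivalence of matrices after localization at every maximal ideal. -/
def LocallyEquivalent {m n R : Type*} [Fintype m] [DecidableEq m] [Fintype n] [DecidableEq n]
    [CommRing R] (A B : Matrix m n R) : Prop :=
  ∀ (P : Ideal R) [P.IsMaximal],
    MatrixEquivalent (A.map (algebraMap R (Localization.AtPrime P)))
      (B.map (algebraMap R (Localization.AtPrime P)))

theorem MatrixEquivalent.locallyEquivalent {m n R : Type*} [Fintype m] [DecidableEq m] [Fintype n]
    [DecidableEq n] [CommRing R] {A B : Matrix m n R} (h : MatrixEquivalent A B) :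
    LocallyEquivalent A B :=
  fun _ _ => h.map _

namespace LocallyEquivalent

variable {m n R : Type*} [Fintype m] [DecidableEq m] [Fintype n] [DecidableEq n] [CommRing R]

theorem symm {A B : Matrix m n R} (h : LocallyEquivalent A B) : LocallyEquivalent B A :=
  fun P _ => (h P).symm

theorem trans {A B C : Matrix m n R} (hAB : LocallyEquivalent A B) (hBC : LocallyEquivalent B C) :
    LocallyEquivalent A C :=
  fun P _ => (hAB P).trans (hBC P)

theorem reindex {m' n' : Type*} [Fintype m'] [DecidableEq m'] [Fintype n'] [DecidableEq n']
    {A B : Matrix m n R} (h : LocallyEquivalent A B) (e : m ≃ m') (f : n ≃ n') :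
    LocallyEquivalent (A.reindex e f) (B.reindex e f) :=
  fun P _ => (h P).reindex e f

theorem entryIdeal_eq {A B : Matrix m n R} (h : LocallyEquivalent A B) :
    entryIdeal A = entryIdeal B :=
  Ideal.eq_of_localization_maximal fun P _ => by
    simpa only [entryIdeal_map] using (h P).entryIdeal_eq

theorem of_smul_oneBlock [IsDomain R] {A B : Matrix m n R} {d : R} (hd : d ≠ 0)
    (h : LocallyEquivalent (d • oneBlock A) (d • oneBlock B)) : LocallyEquivalent A B := by
  intro P _
  let φ := algebraMap R (Localization.AtPrime P)
  have hφd : φ d ≠ 0 := by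
    simpa [φ] using hd
  have map_smul_oneBlock (C : Matrix m n R) :
      (d • oneBlock C).map φ = φ d • oneBlock (C.map φ) := by
    ext (_ | _) (_ | _) <;> simp
  have hP := h P
  rw [map_smul_oneBlock, map_smul_oneBlock] at hP
  exact (hP.of_smul hφd).of_oneBlock

variable [IsDomain R] [IsPrincipalIdealRing R]

theorem matrixEquivalent_unit_sum
    (ih : ∀ A B : Matrix m n R, LocallyEquivalent A B → MatrixEquivalent A B)
    {A B : Matrix (Unit ⊕ m) (Unit ⊕ n) R} (h : LocallyEquivalent A B) : MatrixEquivalent A B := by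
  obtain ⟨d, hA : entryIdeal A = Ideal.span {d}⟩ :=
    IsPrincipalIdealRing.principal (entryIdeal A)
  have hB : entryIdeal B = Ideal.span {d} := h.entryIdeal_eq ▸ hA
  rcases eq_or_ne d 0 with rfl | hd
  · rw [Ideal.span_singleton_zero, entryIdeal_eq_bot_iff] at hA hB
    exact hA ▸ hB ▸ .refl _
  · obtain ⟨D, hAD⟩ := MatrixEquivalent.exists_smul_oneBlock hd hA
    obtain ⟨E, hBE⟩ := MatrixEquivalent.exists_smul_oneBlock hd hB
    have hDE : LocallyEquivalent D E := of_smul_oneBlock hd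
      ((hAD.locallyEquivalent.symm.trans h).trans hBE.locallyEquivalent)
    exact (hAD.trans ((ih D E hDE).congr_oneBlock.smul d)).trans hBE.symm

theorem matrixEquivalent_fin (k l : ℕ) (A B : Matrix (Fin k) (Fin l) R)
    (h : LocallyEquivalent A B) : MatrixEquivalent A B := by
  induction k generalizing l with
  | zero => exact Subsingleton.elim A B ▸ .refl A
  | succ k ih =>
    cases l with
    | zero => exact Subsingleton.elim A B ▸ .refl A
    | succ l =>
      let e (r : ℕ) : Fin (r + 1) ≃ Unit ⊕ Fin r := Fintype.equivOfCardEq (by simp [add_comm])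
      have hreindex := matrixEquivalent_unit_sum (ih l) (h.reindex (e k) (e l))
      simpa using hreindex.reindex (e k).symm (e l).symm

theorem matrixEquivalent {A B : Matrix m n R} (h : LocallyEquivalent A B) :
    MatrixEquivalent A B := by
  let e := Fintype.equivFin m
  let f := Fintype.equivFin n
  simpa using (matrixEquivalent_fin _ _ _ _ (h.reindex e f)).reindex e.symm f.symm

theorem iff_forall_irreducible (hR : ¬IsField R) {A B : Matrix m n R} :
    LocallyEquivalent A B ↔ ∀ (f : R) (hf : Irreducible f),
      haveI := (Ideal.span_singleton_prime hf.ne_zero).mpr hf.prime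
      MatrixEquivalent (A.map (algebraMap R (Localization.AtPrime (Ideal.span {f}))))
        (B.map (algebraMap R (Localization.AtPrime (Ideal.span {f})))) := by
  constructor
  · intro h f hf
    have := PrincipalIdealRing.isMaximal_of_irreducible hf
    exact h (Ideal.span {f})
  · intro h P hP
    obtain ⟨f, rfl : P = Ideal.span {f}⟩ := IsPrincipalIdealRing.principal P
    have hf : f ≠ 0 := by
      rintro rfl
      exact Ring.ne_bot_of_isMaximal_of_not_isField hP hR Ideal.span_singleton_zero
    exact h f ((Ideal.span_singleton_prime hf).mp hP.isPrime).irreducible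

end LocallyEquivalent

theorem equivalent_iff_locally_equivalent_general {m n R : Type*} [Fintype m] [DecidableEq m]
    [Fintype n] [DecidableEq n] [CommRing R] [IsDomain R] [IsPrincipalIdealRing R]
    (A B : Matrix m n R) : MatrixEquivalent A B ↔ LocallyEquivalent A B :=
  ⟨MatrixEquivalent.locallyEquivalent, LocallyEquivalent.matrixEquivalent⟩

/-- Two `n×n` matrices over `F[z]` are equivalent over `F[z]`
(i.e. `A = U·B·V` with `U`, `V` invertible over `F[z]`) if and only if for every
irreducible `f ∈ F[z]` their images are equivalent over the localization
`F[z]_f` of `F[z]` at the prime ideal generated by `f` (equivalently, at the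
multiplicative set of polynomials relatively prime to `f`). -/
theorem equivalent_iff_locally_equivalent
    {F : Type*} [Field F] (n : ℕ) (hn : 1 ≤ n)
    (A B : Matrix (Fin n) (Fin n) (Polynomial F)) :
    (∃ U V : Matrix (Fin n) (Fin n) (Polynomial F),
      IsUnit U ∧ IsUnit V ∧ A = U * B * V) ↔
    (∀ f : Polynomial F, ∀ hf : Irreducible f,
      ∃ U V : Matrix (Fin n) (Fin n)
        (Localization (@Ideal.primeCompl _ _ (Ideal.span {f})
          ((Ideal.span_singleton_prime hf.ne_zero).mpr hf.prime))),
        IsUnit U ∧ IsUnit V ∧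
          A.map (algebraMap (Polynomial F) _) =
            U * B.map (algebraMap (Polynomial F) _) * V) :=
  (equivalent_iff_locally_equivalent_general A B).trans
    (LocallyEquivalent.iff_forall_irreducible (Polynomial.not_isField F))
end
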